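/- arXiv:1906.12250 — 6 statements merged into one kernel-verified Lean document; each statement's English description precedes it below -/
import Mathlib

section
/- Low-rank approximation lemma, part (i). Let F_μ = B_μᵀ ⊗ B_μ^*, where ⊗ is the Kronecker product and B_μ^* the conjugate transpose of B_μ (so that vec(B_μ^* X B_μ) = F_μ vec(X) for all X ∈ ℂ^{M×M}). Then there exist μ₀ > 0 and C > 0 such that for all μ ∈ (0, μ₀): ρ(F_μ) < 1, the matrix I_{M²} − F_μ is invertible, and ‖(I_{M²} − F_μ)^{-1}‖ ≤ C/μ. -/
/-!
Write `p = UUᴴ`, `N = A - p` and `B = A(1 - μH)`. Since `A` commutes with `p` and is the identity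
on its range, `B` acts on the `p`-part of a vector as the compression of `1 - μH`, and on the
complementary part as the stable operator `N`, up to couplings of size `O(μ)`. The compression
contracts by `1 - γμ` because `UᴴHU` is accretive. By Gelfand's formula some power of `N` is a
strict contraction, so `N` itself contracts some seminorm `n` equivalent to the norm. For a weight
`t` independent of `μ`, the functional `‖p x‖ + t n(x - p x)` is then contracted by `B` at a rate
`1 - cμ`: the smallness of `t` absorbs the coupling into the complement, and the gap of `N` absorbs
the other terms. Hence `‖Bᵏ‖ ≤ K(1 - cμ)ᵏ`.

The powers of `F = Bᵀ ⊗ Bᴴ` satisfy `‖Fᵏ‖ = ‖(Bᵏ)ᵀ ⊗ (Bᵏ)ᴴ‖ ≤ ‖Bᵏ‖²`, so `ρ(F) < 1`, and the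
Neumann series bounds `(1 - F)⁻¹` by `K² / (1 - (1 - cμ)²) ≤ K² / (cμ)`.
-/

open Matrix
open scoped ComplexOrder Kronecker

/-- The spectral (operator `ℓ²`-) norm of a complex square matrix. -/
noncomputable def cSpecNorm {n : Type*} [Fintype n] [DecidableEq n]
    (X : Matrix n n ℂ) : ℝ :=
  ‖Matrix.toEuclideanCLM (𝕜 := ℂ) X‖

open Filter Topology
open scoped NNReal

/-! ### Powers in Banach algebras -/

section BanachAlgebra

variable {R : Type*} [NormedRing R]

lemma spectralRadius_lt_one_of_tendsto_pow [NormedAlgebra ℂ R] [CompleteSpace R] {a : R}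
    (ha : Tendsto (a ^ ·) atTop (𝓝 0)) : spectralRadius ℂ a < 1 := by
  cases subsingleton_or_nontrivial R
  · simp only [spectrum.SpectralRadius.of_subsingleton, zero_lt_one]
  refine spectrum.spectralRadius_lt_of_forall_lt a (r := 1) fun z hz => ?_
  have hpow (k : ℕ) : ‖z‖ ^ k ≤ ‖a ^ k‖ * ‖(1 : R)‖ := by
    rw [← norm_pow]
    exact spectrum.norm_le_norm_mul_of_mem (spectrum.pow_mem_pow a k hz)
  have hlim : Tendsto (fun k : ℕ => ‖a ^ k‖ * ‖(1 : R)‖) atTop (𝓝 0) := by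
    simpa only [norm_zero, zero_mul] using ha.norm.mul_const ‖(1 : R)‖
  obtain ⟨k, hk⟩ := (hlim.eventually_lt_const one_pos).exists
  have hz1 : ‖z‖ < 1 :=
    lt_of_pow_lt_pow_left₀ k zero_le_one (by simpa only [one_pow] using (hpow k).trans_lt hk)
  exact_mod_cast hz1

lemma exists_norm_pow_le_pow_of_spectralRadius_lt [NormedAlgebra ℂ R] [CompleteSpace R] {a : R}
    {r : ℝ≥0} (ha : spectralRadius ℂ a < r) : ∃ m > 0, ‖a ^ m‖ ≤ (r : ℝ) ^ m := by
  have hgelfand := spectrum.pow_nnnorm_pow_one_div_tendsto_nhds_spectralRadius a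
  obtain ⟨m, hm, hm0⟩ := ((hgelfand.eventually_lt_const ha).and (eventually_gt_atTop 0)).exists
  refine ⟨m, hm0, ?_⟩
  have hpow := ENNReal.rpow_le_rpow hm.le (Nat.cast_nonneg m)
  rw [← ENNReal.rpow_mul, one_div, inv_mul_cancel₀ (by positivity), ENNReal.rpow_one,
    ENNReal.rpow_natCast] at hpow
  exact_mod_cast hpow

lemma isUnit_one_sub_of_summable_pow {a : R} (ha : Summable (a ^ ·)) : IsUnit (1 - a) :=
  isUnit_iff_exists.mpr ⟨∑' k, a ^ k, ha.one_sub_mul_tsum_pow, ha.tsum_pow_mul_one_sub⟩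

lemma ringInverse_one_sub_eq_tsum_pow {a : R} (ha : Summable (a ^ ·)) :
    Ring.inverse (1 - a) = ∑' k, a ^ k := by
  have hunit := isUnit_one_sub_of_summable_pow ha
  exact hunit.mul_left_cancel (by rw [Ring.mul_inverse_cancel _ hunit, ha.one_sub_mul_tsum_pow])

section GeometricDecay

variable {a : R} {K q : ℝ}

lemma summable_pow_of_norm_pow_le [CompleteSpace R] (hq0 : 0 ≤ q) (hq1 : q < 1)
    (ha : ∀ k : ℕ, ‖a ^ k‖ ≤ K * q ^ k) : Summable (a ^ ·) :=
  .of_norm_bounded ((summable_geometric_of_lt_one hq0 hq1).mul_left K) ha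

lemma norm_ringInverse_one_sub_le [CompleteSpace R] (hq0 : 0 ≤ q) (hq1 : q < 1)
    (ha : ∀ k : ℕ, ‖a ^ k‖ ≤ K * q ^ k) : ‖Ring.inverse (1 - a)‖ ≤ K / (1 - q) := by
  rw [ringInverse_one_sub_eq_tsum_pow (summable_pow_of_norm_pow_le hq0 hq1 ha), div_eq_mul_inv]
  exact tsum_of_norm_bounded ((hasSum_geometric_of_lt_one hq0 hq1).mul_left K) ha

end GeometricDecay

end BanachAlgebra

/-! ### Adapted seminorms -/

section AdaptedSeminorm

variable {𝕜 E : Type*} [NontriviallyNormedField 𝕜] [NormedAddCommGroup E] [NormedSpace 𝕜 E]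

/-- The seminorm `∑_{k < m} r⁻ᵏ ‖Nᵏ x‖`. It turns a bound `‖Nᵐ‖ ≤ rᵐ` on a power into a bound on
`N` itself. -/
noncomputable def adaptedSeminorm (N : E →L[𝕜] E) (r : ℝ≥0) (m : ℕ) : Seminorm 𝕜 E :=
  ∑ k ∈ Finset.range m, (r ^ k)⁻¹ • (normSeminorm 𝕜 E).comp (N ^ k).toLinearMap

variable {N : E →L[𝕜] E} {r : ℝ≥0} {m : ℕ}

lemma adaptedSeminorm_apply (x : E) :
    adaptedSeminorm N r m x = ∑ k ∈ Finset.range m, ((r : ℝ) ^ k)⁻¹ * ‖(N ^ k) x‖ := by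
  simp [adaptedSeminorm, NNReal.smul_def, -ContinuousLinearMap.toLinearMap_pow]

lemma continuous_adaptedSeminorm : Continuous (adaptedSeminorm N r m) := by
  simp only [funext adaptedSeminorm_apply]
  fun_prop

lemma norm_le_adaptedSeminorm (hm : 0 < m) (x : E) : ‖x‖ ≤ adaptedSeminorm N r m x := by
  rw [adaptedSeminorm_apply]
  have hle := Finset.single_le_sum (f := fun k => ((r : ℝ) ^ k)⁻¹ * ‖(N ^ k) x‖)
    (fun _ _ => by positivity) (Finset.mem_range.2 hm)
  simpa only [pow_zero, inv_one, one_mul, one_apply_eq_self] using hle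

lemma adaptedSeminorm_map_le (hr : 0 < r) (hN : ‖N ^ m‖ ≤ (r : ℝ) ^ m) (x : E) :
    adaptedSeminorm N r m (N x) ≤ r * adaptedSeminorm N r m x := by
  set f : ℕ → ℝ := fun k => ((r : ℝ) ^ k)⁻¹ * ‖(N ^ k) x‖ with hf
  have hshift (k : ℕ) : ((r : ℝ) ^ k)⁻¹ * ‖(N ^ k) (N x)‖ = r * f (k + 1) := by
    simp only [hf, pow_succ, mul_apply_eq_comp]
    field_simp
  have hlast : f m ≤ f 0 := by
    simp only [hf, pow_zero, inv_one, one_mul, one_apply_eq_self]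
    rw [inv_mul_le_iff₀ (by positivity)]
    exact (N ^ m).le_of_opNorm_le hN x
  have htele := (Finset.sum_range_succ' f m).symm.trans (Finset.sum_range_succ f m)
  simp only [adaptedSeminorm_apply, hshift, ← Finset.mul_sum]
  exact mul_le_mul_of_nonneg_left (by linarith) r.coe_nonneg

end AdaptedSeminorm

/-! ### Uniform decay under perturbation -/

section PowerBound

variable {𝕜 E : Type*} [NontriviallyNormedField 𝕜] [NormedAddCommGroup E] [NormedSpace 𝕜 E]

lemma seminorm_pow_apply_le {V : Seminorm 𝕜 E} {f : E →L[𝕜] E} {q : ℝ} (hq : 0 ≤ q)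
    (hf : ∀ x, V (f x) ≤ q * V x) (k : ℕ) (x : E) : V ((f ^ k) x) ≤ q ^ k * V x := by
  induction k with
  | zero => simp only [pow_zero, one_apply_eq_self, one_mul, le_refl]
  | succ k ih =>
    calc V ((f ^ (k + 1)) x) = V (f ((f ^ k) x)) := by rw [pow_succ', mul_apply_eq_comp]
      _ ≤ q * V ((f ^ k) x) := hf _
      _ ≤ q * (q ^ k * V x) := by gcongr
      _ = q ^ (k + 1) * V x := by ring

lemma exists_norm_pow_le_of_seminorm_contracts {V : Seminorm 𝕜 E} (hV : Continuous V) {c : ℝ}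
    (hc : 0 < c) (hlow : ∀ x, ‖x‖ ≤ c * V x) :
    ∃ K > (0 : ℝ), ∀ (f : E →L[𝕜] E) (q : ℝ), 0 ≤ q → (∀ x, V (f x) ≤ q * V x) →
      ∀ k : ℕ, ‖f ^ k‖ ≤ K * q ^ k := by
  obtain ⟨d, hd, hup⟩ := V.bound_of_continuous_normedSpace hV
  refine ⟨c * d, by positivity, fun f q hq hf k => ?_⟩
  refine ContinuousLinearMap.opNorm_le_bound _ (by positivity) fun x => ?_
  calc ‖(f ^ k) x‖ ≤ c * V ((f ^ k) x) := hlow _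
    _ ≤ c * (q ^ k * V x) := by gcongr; exact seminorm_pow_apply_le hq hf k x
    _ ≤ c * (q ^ k * (d * ‖x‖)) := by gcongr; exact hup x
    _ = c * d * q ^ k * ‖x‖ := by ring

end PowerBound

lemma eventually_add_mul_lt {a b : ℝ} (c : ℝ) (hab : a < b) :
    ∀ᶠ μ : ℝ in 𝓝[>] 0, a + c * μ < b := by
  have hlim : Tendsto (fun μ : ℝ => a + c * μ) (𝓝 0) (𝓝 a) :=
    Continuous.tendsto' (by fun_prop) _ _ (by ring)
  exact (hlim.mono_left nhdsWithin_le_nhds).eventually_lt_const hab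

lemma eventually_one_sub_mul_pos (c : ℝ) : ∀ᶠ μ : ℝ in 𝓝[>] 0, 0 < 1 - c * μ := by
  filter_upwards [eventually_add_mul_lt c one_pos] with μ hμ
  linarith

/-- The weight `t = γ / (2L)` spends half of the contraction `γμ` of `u` on the coupling. -/
lemma exists_weight_contracts {γ L r : ℝ} (hγ : 0 < γ) (hL : 0 < L) (hr : r < 1) :
    ∃ t : ℝ, 0 < t ∧ ∀ᶠ μ : ℝ in 𝓝[>] 0, ∀ u w u' w' : ℝ, 0 ≤ w →
      u' ≤ (1 - γ * μ) * u + μ * (L * w) → w' ≤ r * w + μ * (L * (u + w)) →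
      u' + t * w' ≤ (1 - γ / 2 * μ) * (u + t * w) := by
  obtain ⟨t, ht, htL⟩ : ∃ t : ℝ, 0 < t ∧ t * L = γ / 2 :=
    ⟨γ / (2 * L), by positivity, by field_simp⟩
  refine ⟨t, ht, ?_⟩
  have hgap : ∀ᶠ μ : ℝ in 𝓝[>] 0, t * r + (L + t * L + t * (γ / 2)) * μ < t :=
    eventually_add_mul_lt _ (mul_lt_of_lt_one_right ht hr)
  filter_upwards [hgap] with μ hμ u w u' w' hw hu' hw'
  calc u' + t * w'
      ≤ (1 - γ * μ) * u + μ * (L * w) + t * (r * w + μ * (L * (u + w))) := by gcongr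
    _ = (1 - γ * μ) * u + μ * (t * L) * u + (t * r + μ * (L + t * L)) * w := by ring
    _ = (1 - γ / 2 * μ) * u + (t * r + μ * (L + t * L)) * w := by rw [htL]; ring
    _ ≤ (1 - γ / 2 * μ) * u + (t * (1 - γ / 2 * μ)) * w := by gcongr; linarith
    _ = (1 - γ / 2 * μ) * (u + t * w) := by ring

section SplitSeminorm

variable {𝕜 E : Type*} [NontriviallyNormedField 𝕜] [NormedAddCommGroup E] [NormedSpace 𝕜 E]

/-- The seminorm `‖p x‖ + t n(x - p x)`, a Lyapunov functional for operators that are almost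
block diagonal with respect to the projection `p`. -/
noncomputable def splitSeminorm (p : E →L[𝕜] E) (n : Seminorm 𝕜 E) (t : ℝ≥0) : Seminorm 𝕜 E :=
  (normSeminorm 𝕜 E).comp p.toLinearMap + t • n.comp (1 - p).toLinearMap

variable {a p h : E →L[𝕜] E} {n : Seminorm 𝕜 E} {t : ℝ≥0}

lemma splitSeminorm_apply (x : E) : splitSeminorm p n t x = ‖p x‖ + t * n (x - p x) := rfl

lemma continuous_splitSeminorm (hn : Continuous n) : Continuous (splitSeminorm p n t) := by
  simp only [funext splitSeminorm_apply]
  fun_prop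

lemma norm_le_norm_proj_add_seminorm (hn : ∀ x, ‖x‖ ≤ n x) (x : E) :
    ‖x‖ ≤ ‖p x‖ + n (x - p x) :=
  calc ‖x‖ = ‖p x + (x - p x)‖ := by rw [add_sub_cancel]
    _ ≤ ‖p x‖ + ‖x - p x‖ := norm_add_le _ _
    _ ≤ ‖p x‖ + n (x - p x) := by gcongr; exact hn _

lemma norm_le_splitSeminorm (ht : 0 < t) (hn : ∀ x, ‖x‖ ≤ n x) (x : E) :
    ‖x‖ ≤ (1 + (t : ℝ)⁻¹) * splitSeminorm p n t x := by
  calc ‖x‖ ≤ ‖p x‖ + n (x - p x) := norm_le_norm_proj_add_seminorm hn x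
    _ ≤ ‖p x‖ + n (x - p x) + ((t : ℝ)⁻¹ * ‖p x‖ + t * n (x - p x)) :=
      le_add_of_nonneg_right (by positivity)
    _ = (1 + (t : ℝ)⁻¹) * splitSeminorm p n t x := by
      rw [splitSeminorm_apply]
      field_simp
      ring

lemma norm_proj_perturbed_le (hpa : p * a = p) {μ : 𝕜} {q : ℝ} {x : E}
    (hcontr : ‖p x - μ • p (h (p x))‖ ≤ q * ‖p x‖) :
    ‖p ((a * (1 - μ • h)) x)‖ ≤ q * ‖p x‖ + ‖μ‖ * (‖p * h‖ * ‖x - p x‖) := by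
  have hsplit : p ((a * (1 - μ • h)) x)
      = (p x - μ • p (h (p x))) - μ • (p * h) (x - p x) := by
    rw [← mul_apply_eq_comp, ← mul_assoc, hpa]
    simp only [mul_apply_eq_comp, _root_.sub_apply, _root_.smul_apply, one_apply_eq_self,
      map_sub, map_smul, smul_sub]
    abel
  rw [hsplit]
  refine (norm_sub_le _ _).trans (add_le_add hcontr ?_)
  rw [norm_smul]
  gcongr
  exact (p * h).le_opNorm _

lemma seminorm_compl_perturbed_le (hp : IsIdempotentElem p) (hap : a * p = p) (hpa : p * a = p)
    {μ : 𝕜} {r c : ℝ} {x : E} (hN : n ((a - p) (x - p x)) ≤ r * n (x - p x))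
    (hc : n ((a - p) (h x)) ≤ c * ‖x‖) :
    n ((a * (1 - μ • h)) x - p ((a * (1 - μ • h)) x))
      ≤ r * n (x - p x) + ‖μ‖ * (c * ‖x‖) := by
  have hap' (y : E) : a (p y) = p y := by rw [← mul_apply_eq_comp, hap]
  have hpa' (y : E) : p (a y) = p y := by rw [← mul_apply_eq_comp, hpa]
  have hpp (y : E) : p (p y) = p y := by rw [← mul_apply_eq_comp, hp.eq]
  have hsplit : (a * (1 - μ • h)) x - p ((a * (1 - μ • h)) x)
      = (a - p) (x - p x) - μ • (a - p) (h x) := by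
    simp only [mul_apply_eq_comp, _root_.sub_apply, _root_.smul_apply, one_apply_eq_self,
      map_sub, map_smul, hap', hpa', hpp, smul_sub]
    abel
  rw [hsplit]
  refine (map_sub_le_add n _ _).trans (add_le_add hN ?_)
  rw [map_smul_eq_mul]
  gcongr

end SplitSeminorm

/-- A stable operator on the complement of `p` keeps its seminorm contraction under an `O(μ)`
perturbation, whereas on the range of `p` the perturbation itself must supply the contraction. -/
theorem exists_eventually_norm_perturbed_pow_le {E : Type*} [NormedAddCommGroup E]
    [NormedSpace ℂ E] [CompleteSpace E] {a p h : E →L[ℂ] E} (hp : IsIdempotentElem p)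
    (hap : a * p = p) (hpa : p * a = p) (hρ : spectralRadius ℂ (a - p) < 1) {γ : ℝ} (hγ : 0 < γ)
    (hcontr : ∀ᶠ μ : ℝ in 𝓝[>] 0, ∀ x, p x = x →
      ‖x - (μ : ℂ) • p (h x)‖ ≤ (1 - γ * μ) * ‖x‖) :
    ∃ c > (0 : ℝ), ∃ K > (0 : ℝ), ∀ᶠ μ : ℝ in 𝓝[>] 0, ∀ k : ℕ,
      ‖(a * (1 - (μ : ℂ) • h)) ^ k‖ ≤ K * (1 - c * μ) ^ k := by
  obtain ⟨r, hρr, hr1⟩ := ENNReal.lt_iff_exists_nnreal_btwn.1 hρ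
  have hr0 : 0 < r := by exact_mod_cast zero_le.trans_lt hρr
  obtain ⟨m, hm, hNm⟩ := exists_norm_pow_le_pow_of_spectralRadius_lt hρr
  set n := adaptedSeminorm (a - p) r m
  have hn : ∀ x, ‖x‖ ≤ n x := norm_le_adaptedSeminorm hm
  have hn_cont : Continuous n := continuous_adaptedSeminorm
  obtain ⟨d, hd, hnd⟩ := (n.comp ((a - p) * h).toLinearMap).bound_of_continuous_normedSpace
    (hn_cont.comp ((a - p) * h).continuous)
  obtain ⟨t, ht, hweight⟩ := exists_weight_contracts (L := ‖p * h‖ + d) hγ (by positivity)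
    (by exact_mod_cast hr1 : (r : ℝ) < 1)
  lift t to ℝ≥0 using ht.le
  obtain ⟨K, hK, hpow⟩ := exists_norm_pow_le_of_seminorm_contracts
    (continuous_splitSeminorm (p := p) (t := t) hn_cont) (by positivity)
    (norm_le_splitSeminorm (by exact_mod_cast ht) hn)
  refine ⟨γ / 2, by positivity, K, hK, ?_⟩
  filter_upwards [hcontr, hweight, eventually_one_sub_mul_pos (γ / 2), self_mem_nhdsWithin]
    with μ hcontr hweight hrate hμ
  have hμ_norm : ‖(μ : ℂ)‖ = μ := Complex.norm_of_nonneg (le_of_lt hμ)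
  have hμ0 : 0 ≤ μ := le_of_lt hμ
  refine hpow _ _ hrate.le fun x => hweight ‖p x‖ (n (x - p x)) _ _ (apply_nonneg _ _) ?_ ?_
  · have hpx : p (p x) = p x := by rw [← mul_apply_eq_comp, hp.eq]
    refine (norm_proj_perturbed_le hpa (hcontr _ hpx)).trans ?_
    rw [hμ_norm]
    gcongr
    exacts [le_add_of_nonneg_right hd.le, hn _]
  · refine (seminorm_compl_perturbed_le hp hap hpa (adaptedSeminorm_map_le hr0 hNm _)
      (hnd x)).trans ?_
    rw [hμ_norm]
    gcongr
    exacts [le_add_of_nonneg_left (norm_nonneg _), norm_le_norm_proj_add_seminorm hn x]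

section Accretive

variable {𝕜 E : Type*} [RCLike 𝕜] [NormedAddCommGroup E] [InnerProductSpace 𝕜 E]

/-- In the expansion of `‖x - μ g x‖²` the cross term gains `2νμ‖x‖²`, which beats the quadratic
term for small `μ`. -/
lemma eventually_norm_sub_smul_le_of_accretiveOn {g : E →L[𝕜] E} {s : Set E} {γ ν : ℝ}
    (hγν : γ < ν) (hg : ∀ x ∈ s, ν * ‖x‖ ^ 2 ≤ RCLike.re (inner 𝕜 x (g x))) :
    ∀ᶠ μ : ℝ in 𝓝[>] 0, ∀ x ∈ s, ‖x - (μ : 𝕜) • g x‖ ≤ (1 - γ * μ) * ‖x‖ := by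
  filter_upwards [eventually_one_sub_mul_pos γ, self_mem_nhdsWithin,
    eventually_add_mul_lt (‖g‖ ^ 2) (by linarith : 2 * γ < 2 * ν)] with μ hγμ hμ hquad x hx
  have hμ0 : 0 ≤ μ := le_of_lt hμ
  refine le_of_sq_le_sq ?_ (mul_nonneg hγμ.le (norm_nonneg x))
  calc ‖x - (μ : 𝕜) • g x‖ ^ 2
      = ‖x‖ ^ 2 - 2 * (μ * RCLike.re (inner 𝕜 x (g x))) + (μ * ‖g x‖) ^ 2 := by
        rw [norm_sub_sq (𝕜 := 𝕜), inner_smul_right, RCLike.re_ofReal_mul, norm_smul,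
          RCLike.norm_ofReal, abs_of_nonneg hμ0]
    _ ≤ ‖x‖ ^ 2 - 2 * (μ * (ν * ‖x‖ ^ 2)) + (μ * (‖g‖ * ‖x‖)) ^ 2 := by
        gcongr
        exacts [hg x hx, g.le_opNorm x]
    _ = (1 - μ * (2 * ν - ‖g‖ ^ 2 * μ)) * ‖x‖ ^ 2 := by ring
    _ ≤ (1 - μ * (2 * γ)) * ‖x‖ ^ 2 := by gcongr; linarith
    _ ≤ ((1 - γ * μ) * ‖x‖) ^ 2 := by nlinarith [sq_nonneg (γ * μ * ‖x‖)]

end Accretive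

theorem exists_eventually_norm_perturbed_pow_le_of_accretive {E : Type*}
    [NormedAddCommGroup E] [InnerProductSpace ℂ E] [CompleteSpace E] {a p h : E →L[ℂ] E}
    (hp : IsStarProjection p) (hap : a * p = p) (hpa : p * a = p)
    (hρ : spectralRadius ℂ (a - p) < 1) {ν : ℝ} (hν : 0 < ν)
    (hacc : ∀ x, p x = x → ν * ‖x‖ ^ 2 ≤ RCLike.re (inner ℂ x (h x))) :
    ∃ c > (0 : ℝ), ∃ K > (0 : ℝ), ∀ᶠ μ : ℝ in 𝓝[>] 0, ∀ k : ℕ,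
      ‖(a * (1 - (μ : ℂ) • h)) ^ k‖ ≤ K * (1 - c * μ) ^ k := by
  refine exists_eventually_norm_perturbed_pow_le hp.isIdempotentElem hap hpa hρ (half_pos hν)
    (eventually_norm_sub_smul_le_of_accretiveOn (g := p * h) (s := {x | p x = x})
      (half_lt_self hν) fun x hx => ?_)
  have hcompress : inner ℂ x ((p * h) x) = inner ℂ x (h x) := by
    have hpx : p x = x := hx
    calc inner ℂ x ((p * h) x) = inner ℂ (p x) (h x) :=
          (hp.isSelfAdjoint.isSymmetric x (h x)).symm
      _ = inner ℂ x (h x) := by rw [hpx]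
  rw [hcompress]
  exact hacc x hx

/-! ### Kronecker products -/

section Kronecker

open scoped Matrix.Norms.L2Operator

variable {m n : Type*} [Fintype m] [DecidableEq m] [Fintype n] [DecidableEq n]

lemma l2_opNorm_transpose (X : Matrix m m ℂ) : ‖Xᵀ‖ = ‖X‖ :=
  StarAlgEquiv.norm_map (.ofAlgEquiv (transposeAlgEquiv m ℂ ℂ) fun _ => rfl :
    Matrix m m ℂ ≃⋆ₐ[ℂ] (Matrix m m ℂ)ᵐᵒᵖ) X

/-- The embedding `X ↦ X ⊗ 1`, contractive as a homomorphism of C⋆-algebras. -/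
noncomputable def kroneckerOneStarHom : Matrix m m ℂ →⋆ₙₐ[ℂ] Matrix (m × n) (m × n) ℂ where
  toFun X := X ⊗ₖ 1
  map_smul' c X := smul_kronecker c X 1
  map_zero' := zero_kronecker 1
  map_add' X Y := add_kronecker X Y 1
  map_mul' X Y := by rw [← mul_kronecker_mul, one_mul]
  map_star' X := by simp only [star_eq_conjTranspose, conjTranspose_kronecker, conjTranspose_one]

/-- The embedding `Y ↦ 1 ⊗ Y`, contractive as a homomorphism of C⋆-algebras. -/
noncomputable def oneKroneckerStarHom : Matrix n n ℂ →⋆ₙₐ[ℂ] Matrix (m × n) (m × n) ℂ where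
  toFun Y := 1 ⊗ₖ Y
  map_smul' c Y := kronecker_smul c 1 Y
  map_zero' := kronecker_zero 1
  map_add' X Y := kronecker_add 1 X Y
  map_mul' X Y := by rw [← mul_kronecker_mul, one_mul]
  map_star' Y := by simp only [star_eq_conjTranspose, conjTranspose_kronecker, conjTranspose_one]

lemma l2_opNorm_kronecker_le (X : Matrix m m ℂ) (Y : Matrix n n ℂ) : ‖X ⊗ₖ Y‖ ≤ ‖X‖ * ‖Y‖ :=
  calc ‖X ⊗ₖ Y‖ = ‖(X ⊗ₖ (1 : Matrix n n ℂ)) * ((1 : Matrix m m ℂ) ⊗ₖ Y)‖ := by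
        rw [← mul_kronecker_mul, mul_one, one_mul]
    _ ≤ ‖X ⊗ₖ (1 : Matrix n n ℂ)‖ * ‖(1 : Matrix m m ℂ) ⊗ₖ Y‖ := norm_mul_le _ _
    _ ≤ ‖X‖ * ‖Y‖ := by
      gcongr
      exacts [NonUnitalStarAlgHom.norm_apply_le kroneckerOneStarHom X,
        NonUnitalStarAlgHom.norm_apply_le oneKroneckerStarHom Y]

lemma transpose_kronecker_conjTranspose_pow (B : Matrix m m ℂ) (k : ℕ) :
    (Bᵀ ⊗ₖ Bᴴ) ^ k = (B ^ k)ᵀ ⊗ₖ (B ^ k)ᴴ := by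
  induction k with
  | zero => simp only [pow_zero, transpose_one, conjTranspose_one, one_kronecker_one]
  | succ k ih =>
    rw [pow_succ, ih, ← mul_kronecker_mul, ← transpose_mul, ← conjTranspose_mul, ← pow_succ']

lemma norm_transpose_kronecker_conjTranspose_pow_le {B : Matrix m m ℂ} {K q : ℝ}
    (hB : ∀ k : ℕ, ‖B ^ k‖ ≤ K * q ^ k) (k : ℕ) :
    ‖(Bᵀ ⊗ₖ Bᴴ) ^ k‖ ≤ K ^ 2 * (q ^ 2) ^ k :=
  calc ‖(Bᵀ ⊗ₖ Bᴴ) ^ k‖ ≤ ‖(B ^ k)ᵀ‖ * ‖(B ^ k)ᴴ‖ := by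
        rw [transpose_kronecker_conjTranspose_pow]
        exact l2_opNorm_kronecker_le _ _
    _ = ‖B ^ k‖ ^ 2 := by rw [l2_opNorm_transpose, l2_opNorm_conjTranspose, sq]
    _ ≤ (K * q ^ k) ^ 2 := by gcongr; exact hB k
    _ = K ^ 2 * (q ^ 2) ^ k := by ring

lemma resolvent_transpose_kronecker_conjTranspose {B : Matrix m m ℂ} {K q : ℝ} (hq0 : 0 ≤ q)
    (hq1 : q < 1) (hB : ∀ k : ℕ, ‖B ^ k‖ ≤ K * q ^ k) :
    spectralRadius ℂ (Bᵀ ⊗ₖ Bᴴ) < 1 ∧ IsUnit (1 - Bᵀ ⊗ₖ Bᴴ) ∧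
      cSpecNorm (1 - Bᵀ ⊗ₖ Bᴴ)⁻¹ ≤ K ^ 2 / (1 - q) := by
  have hqq : q ^ 2 ≤ q := by nlinarith
  have hpow := norm_transpose_kronecker_conjTranspose_pow_le hB
  have hsum := summable_pow_of_norm_pow_le (sq_nonneg q) (hqq.trans_lt hq1) hpow
  refine ⟨spectralRadius_lt_one_of_tendsto_pow hsum.tendsto_atTop_zero,
    isUnit_one_sub_of_summable_pow hsum, ?_⟩
  calc cSpecNorm (1 - Bᵀ ⊗ₖ Bᴴ)⁻¹ = ‖Ring.inverse (1 - Bᵀ ⊗ₖ Bᴴ)‖ := by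
        rw [cSpecNorm, l2_opNorm_toEuclideanCLM, nonsing_inv_eq_ringInverse]
    _ ≤ K ^ 2 / (1 - q ^ 2) := norm_ringInverse_one_sub_le (sq_nonneg q) (hqq.trans_lt hq1) hpow
    _ ≤ K ^ 2 / (1 - q) := by gcongr

end Kronecker

/-! ### The resolvent bound -/

section Matrix

open scoped Matrix.Norms.L2Operator

variable {𝕜 m n : Type*} [RCLike 𝕜] [Fintype m] [Fintype n] [DecidableEq n]

lemma isStarProjection_mul_conjTranspose {R : Type*} [Semiring R] [StarRing R] {U : Matrix m n R}
    (hUU : Uᴴ * U = 1) : IsStarProjection (U * Uᴴ) where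
  isIdempotentElem := by
    rw [IsIdempotentElem, Matrix.mul_assoc, ← Matrix.mul_assoc Uᴴ, hUU, Matrix.one_mul]
  isSelfAdjoint := isHermitian_mul_conjTranspose_self U

lemma mul_re_dotProduct_le_of_posSemidef_sub_smul_one {A : Matrix n n 𝕜} {ν : ℝ}
    (hA : (A - (ν : 𝕜) • (1 : Matrix n n 𝕜)).PosSemidef) (y : n → 𝕜) :
    ν * RCLike.re (star y ⬝ᵥ y) ≤ RCLike.re (star y ⬝ᵥ A *ᵥ y) := by
  have hnonneg := hA.re_dotProduct_nonneg y
  rw [sub_mulVec, smul_mulVec, one_mulVec, dotProduct_sub, dotProduct_smul, smul_eq_mul,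
    map_sub, RCLike.re_ofReal_mul, sub_nonneg] at hnonneg
  exact hnonneg

variable [DecidableEq m]

lemma mul_norm_sq_le_re_inner_toEuclideanCLM {U : Matrix m n 𝕜} {H : Matrix m m 𝕜} {ν : ℝ}
    (hUU : Uᴴ * U = 1)
    (hH : ∀ y : n → 𝕜, ν * RCLike.re (star y ⬝ᵥ y) ≤ RCLike.re (star y ⬝ᵥ (Uᴴ * H * U) *ᵥ y))
    {x : EuclideanSpace 𝕜 m} (hx : toEuclideanCLM (𝕜 := 𝕜) (U * Uᴴ) x = x) :
    ν * ‖x‖ ^ 2 ≤ RCLike.re (inner 𝕜 x (toEuclideanCLM (𝕜 := 𝕜) H x)) := by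
  obtain ⟨y, hy⟩ : ∃ y : n → 𝕜, x.ofLp = U *ᵥ y :=
    ⟨Uᴴ *ᵥ x.ofLp, by rw [mulVec_mulVec, ← ofLp_toEuclideanCLM, hx]⟩
  have hnorm : ‖x‖ ^ 2 = RCLike.re (star y ⬝ᵥ y) := by
    rw [← inner_self_eq_norm_sq (𝕜 := 𝕜), EuclideanSpace.inner_eq_star_dotProduct, hy,
      dotProduct_comm, star_mulVec, dotProduct_mulVec, vecMul_vecMul, hUU, vecMul_one]
  have hinner : inner 𝕜 x (toEuclideanCLM (𝕜 := 𝕜) H x) = star y ⬝ᵥ (Uᴴ * H * U) *ᵥ y := by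
    rw [EuclideanSpace.inner_eq_star_dotProduct, ofLp_toEuclideanCLM, hy, dotProduct_comm,
      star_mulVec, ← dotProduct_mulVec, mulVec_mulVec, mulVec_mulVec, Matrix.mul_assoc]
  rw [hnorm, hinner]
  exact hH y

theorem exists_eventually_l2_opNorm_perturbed_pow_le {U : Matrix m n ℂ} {A H : Matrix m m ℂ}
    {ν : ℝ} (hν : 0 < ν) (hUU : Uᴴ * U = 1) (hAU : A * U = U) (hUA : Uᴴ * A = Uᴴ)
    (hρ : spectralRadius ℂ (A - U * Uᴴ) < 1)
    (hH : ∀ y : n → ℂ, ν * (star y ⬝ᵥ y).re ≤ (star y ⬝ᵥ (Uᴴ * H * U) *ᵥ y).re) :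
    ∃ c > (0 : ℝ), ∃ K > (0 : ℝ), ∀ᶠ μ : ℝ in 𝓝[>] 0, ∀ k : ℕ,
      ‖(A * (1 - (μ : ℂ) • H)) ^ k‖ ≤ K * (1 - c * μ) ^ k := by
  set T := toEuclideanCLM (n := m) (𝕜 := ℂ)
  have hAp : T A * T (U * Uᴴ) = T (U * Uᴴ) := by rw [← map_mul, ← Matrix.mul_assoc, hAU]
  have hpA : T (U * Uᴴ) * T A = T (U * Uᴴ) := by rw [← map_mul, Matrix.mul_assoc, hUA]
  have hρT : spectralRadius ℂ (T A - T (U * Uᴴ)) < 1 := by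
    rwa [← map_sub, spectralRadius, AlgEquiv.spectrum_eq T]
  obtain ⟨c, hc, K, hK, hdecay⟩ := exists_eventually_norm_perturbed_pow_le_of_accretive
    ((isStarProjection_mul_conjTranspose hUU).map T) hAp hpA hρT hν
    fun _ hx => mul_norm_sq_le_re_inner_toEuclideanCLM hUU hH hx
  refine ⟨c, hc, K, hK, hdecay.mono fun μ hμ k => ?_⟩
  rw [← l2_opNorm_toEuclideanCLM]
  simpa only [T, map_pow, map_mul, map_sub, map_one, map_smul] using hμ k

theorem low_rank_approximation_part_i_general (U : Matrix m n ℂ) (A H : Matrix m m ℂ) {ν : ℝ}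
    (hν : 0 < ν) (hUU : Uᴴ * U = 1) (hAU : A * U = U) (hUA : Uᴴ * A = Uᴴ)
    (hρ : spectralRadius ℂ (A - U * Uᴴ) < 1)
    (hH : ∀ y : n → ℂ, ν * (star y ⬝ᵥ y).re ≤ (star y ⬝ᵥ (Uᴴ * H * U) *ᵥ y).re) :
    ∃ μ₀ : ℝ, 0 < μ₀ ∧ ∃ C : ℝ, 0 < C ∧ ∀ μ : ℝ, 0 < μ → μ < μ₀ →
      spectralRadius ℂ ((A * (1 - (μ : ℂ) • H))ᵀ ⊗ₖ (A * (1 - (μ : ℂ) • H))ᴴ) < 1 ∧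
      IsUnit (1 - (A * (1 - (μ : ℂ) • H))ᵀ ⊗ₖ (A * (1 - (μ : ℂ) • H))ᴴ) ∧
      cSpecNorm (1 - (A * (1 - (μ : ℂ) • H))ᵀ ⊗ₖ (A * (1 - (μ : ℂ) • H))ᴴ)⁻¹ ≤ C / μ := by
  obtain ⟨c, hc, K, hK, hdecay⟩ :=
    exists_eventually_l2_opNorm_perturbed_pow_le hν hUU hAU hUA hρ hH
  obtain ⟨μ₀, hμ₀, hsmall⟩ := mem_nhdsGT_iff_exists_Ioo_subset.1
    (hdecay.and (eventually_one_sub_mul_pos c))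
  refine ⟨μ₀, hμ₀, K ^ 2 / c, by positivity, fun μ hμ hμμ₀ => ?_⟩
  obtain ⟨hpow, hrate⟩ := hsmall ⟨hμ, hμμ₀⟩
  have hcμ : 1 - c * μ < 1 := sub_lt_self 1 (by positivity)
  simpa only [sub_sub_cancel, div_div] using
    resolvent_transpose_kronecker_conjTranspose hrate.le hcμ hpow

end Matrix

/-- **Low-rank approximation lemma, part (i).**
Setting: `M ≥ P ≥ 1`; `U ∈ ℂ^{M×P}` has orthonormal columns, `A` satisfies `AU = U`,
`UᴴA = Uᴴ` and `ρ(A - UUᴴ) < 1`; `H` is Hermitian with `0 ≤ H ≤ δI` and `νI_P ≤ UᴴHU`,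
`0 < ν ≤ δ`; `B_μ = A(I - μH)` and `F_μ = B_μᵀ ⊗ B_μᴴ` (Kronecker product).
Conclusion: there exist `μ₀ > 0` and `C > 0` such that for all `μ ∈ (0, μ₀)`:
`ρ(F_μ) < 1`, the matrix `I - F_μ` is invertible, and `‖(I - F_μ)⁻¹‖ ≤ C/μ`. -/
theorem low_rank_approximation_part_i
    {M P : ℕ} (hP : 1 ≤ P) (hPM : P ≤ M)
    (U : Matrix (Fin M) (Fin P) ℂ) (A H : Matrix (Fin M) (Fin M) ℂ)
    (ν δ : ℝ) (hν : 0 < ν) (hνδ : ν ≤ δ)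
    (hUU : Uᴴ * U = 1)
    (hAU : A * U = U)
    (hUA : Uᴴ * A = Uᴴ)
    (hρ : spectralRadius ℂ (A - U * Uᴴ) < 1)
    (hH0 : H.PosSemidef)
    (hHδ : ((δ : ℂ) • (1 : Matrix (Fin M) (Fin M) ℂ) - H).PosSemidef)
    (hHν : (Uᴴ * H * U - (ν : ℂ) • (1 : Matrix (Fin P) (Fin P) ℂ)).PosSemidef) :
    ∃ μ₀ : ℝ, 0 < μ₀ ∧ ∃ C : ℝ, 0 < C ∧ ∀ μ : ℝ, 0 < μ → μ < μ₀ →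
      spectralRadius ℂ ((A * (1 - (μ : ℂ) • H))ᵀ ⊗ₖ (A * (1 - (μ : ℂ) • H))ᴴ) < 1 ∧
      IsUnit (1 - (A * (1 - (μ : ℂ) • H))ᵀ ⊗ₖ (A * (1 - (μ : ℂ) • H))ᴴ) ∧
      cSpecNorm (1 - (A * (1 - (μ : ℂ) • H))ᵀ ⊗ₖ (A * (1 - (μ : ℂ) • H))ᴴ)⁻¹ ≤ C / μ := by
  exact low_rank_approximation_part_i_general U A H hν hUU hAU hUA hρ
    (mul_re_dotProduct_le_of_posSemidef_sub_smul_one hHν)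
end

section
/- Low-rank approximation lemma, part (ii). Let F_μ = B_μᵀ ⊗ B_μ^* and let Z_μ = I_P ⊗ (μ U* H U) + (μ U* H U)ᵀ ⊗ I_P ∈ ℂ^{P²×P²}, which is invertible since U* H U is Hermitian positive definite. Then there exist μ₀ > 0 and C > 0 such that for all μ ∈ (0, μ₀): ‖(I_{M²} − F_μ)^{-1} − (conj(U) ⊗ U) Z_μ^{-1} (Uᵀ ⊗ U*)‖ ≤ C, where conj(U) denotes entrywise complex conjugation; i.e., (I − F_μ)^{-1} equals the rank-P² matrix (conj(U) ⊗ U) Z_μ^{-1} (Uᵀ ⊗ U*) up to an O(1) correction, while (I − F_μ)^{-1} itself is O(1/μ). -/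
open Matrix
open scoped ComplexOrder Kronecker

/-!
Write `κ B = Bᵀ ⊗ Bᴴ` for the matrix of `X ↦ Bᴴ X B`, so that `F_μ = κ (A - μ A H)`. Since
`A ^ k → U Uᴴ`, also `κ A ^ k → q := κ (Uᴴ) κ (U)`; hence `q` is the spectral projection of `κ A`
at the eigenvalue `1`, and `1 - κ A + q` is invertible. With `t = 1 - κ A` and `e` the derivative of
`1 - F_μ` at `0`, the compression `κ (U) e κ (Uᴴ)` is the Lyapunov matrix `Z` of `Uᴴ H U`, which is
positive definite, so `r = κ (Uᴴ) Z⁻¹ κ (U)` inverts `e` on the range of `q`.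

The Laurent ansatz `(1 - F_μ)⁻¹ ≈ μ⁻¹ r + s` requires `t r = r t = 0` and
`t s + e r = 1 = s t + r e`, which is solved by `s = (1 - r e) (t + q)⁻¹ (1 - e r)`. The ansatz is
then an inverse of `1 - F_μ` up to a factor `1 + O(μ)`. Being itself `O(μ⁻¹)`, it differs from the
true inverse by `O(1)`, and `μ⁻¹ r = κ (Uᴴ) Z_μ⁻¹ κ (U)`.
-/

open scoped Matrix.Norms.L2Operator Topology
open Filter Asymptotics

section PowerLimits

section Monoid

variable {M : Type*} [Monoid M] {a q : M}

theorem pow_mul_eq_right_of_mul_eq_right (haq : a * q = q) (k : ℕ) : a ^ k * q = q := by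
  induction k with
  | zero => rw [pow_zero, one_mul]
  | succ k ih => rw [pow_succ, mul_assoc, haq, ih]

variable [TopologicalSpace M] [SeparatelyContinuousMul M] [T2Space M]

theorem mul_eq_right_of_tendsto_pow (h : Tendsto (a ^ ·) atTop (𝓝 q)) : a * q = q :=
  tendsto_nhds_unique (h.const_mul a) <| by
    simpa only [← pow_succ'] using (tendsto_add_atTop_iff_nat 1).2 h

theorem mul_eq_left_of_tendsto_pow (h : Tendsto (a ^ ·) atTop (𝓝 q)) : q * a = q :=
  tendsto_nhds_unique (h.mul_const a) <| by
    simpa only [← pow_succ] using (tendsto_add_atTop_iff_nat 1).2 h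

theorem isIdempotentElem_of_tendsto_pow (h : Tendsto (a ^ ·) atTop (𝓝 q)) : IsIdempotentElem q :=
  tendsto_nhds_unique (h.mul_const q) <| by
    simpa only [pow_mul_eq_right_of_mul_eq_right (mul_eq_right_of_tendsto_pow h)]
      using tendsto_const_nhds

end Monoid

theorem sub_pow_succ_of_mul_eq {R : Type*} [Ring R] {a q : R} (haq : a * q = q) (hqa : q * a = q)
    (hq : IsIdempotentElem q) (k : ℕ) : (a - q) ^ (k + 1) = a ^ (k + 1) - q := by
  induction k with
  | zero => simp only [zero_add, pow_one]
  | succ k ih =>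
    rw [pow_succ, ih, sub_mul, mul_sub, mul_sub, hqa, hq.eq, pow_mul_eq_right_of_mul_eq_right haq,
      ← pow_succ, sub_self, sub_zero]

section NormedRing

variable {R : Type*} [NormedRing R] [HasSummableGeomSeries R] {a q : R}

theorem isUnit_one_sub_of_tendsto_pow_zero (h : Tendsto (a ^ ·) atTop (𝓝 0)) :
    IsUnit (1 - a) := by
  obtain ⟨k, hk⟩ := (h.norm.eventually_lt_const (norm_zero.trans_lt one_pos)).exists
  have hunit : IsUnit (1 - a ^ k) := isUnit_one_sub_of_norm_lt_one hk
  rw [← mul_neg_geom_sum] at hunit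
  have hcomm : Commute (1 - a) (∑ i ∈ Finset.range k, a ^ i) :=
    (mul_neg_geom_sum a k).trans (geom_sum_mul_neg a k).symm
  exact (hcomm.isUnit_mul_iff.1 hunit).1

theorem isUnit_one_sub_add_of_tendsto_pow (h : Tendsto (a ^ ·) atTop (𝓝 q)) :
    IsUnit (1 - a + q) := by
  have haq := mul_eq_right_of_tendsto_pow h
  have hqa := mul_eq_left_of_tendsto_pow h
  have hlim : Tendsto ((a - q) ^ ·) atTop (𝓝 0) := by
    rw [← tendsto_add_atTop_iff_nat 1]
    simpa only [sub_pow_succ_of_mul_eq haq hqa (isIdempotentElem_of_tendsto_pow h), sub_self]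
      using ((tendsto_add_atTop_iff_nat 1).2 h).sub_const q
  rw [sub_add]
  exact isUnit_one_sub_of_tendsto_pow_zero hlim

end NormedRing

section ComplexBanachAlgebra

variable {R : Type*} [NormedRing R] [NormedAlgebra ℂ R] [CompleteSpace R] {a q : R}

theorem tendsto_pow_zero_of_spectralRadius_lt_one (h : spectralRadius ℂ a < 1) :
    Tendsto (a ^ ·) atTop (𝓝 0) := by
  obtain ⟨r, har, hr⟩ := ENNReal.lt_iff_exists_nnreal_btwn.1 h
  have hgelfand := spectrum.pow_nnnorm_pow_one_div_tendsto_nhds_spectralRadius a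
  have hbound : ∀ᶠ k : ℕ in atTop, ‖a ^ k‖ ≤ (r : ℝ) ^ k := by
    filter_upwards [hgelfand.eventually_lt_const har, eventually_ne_atTop 0] with k hk hk0
    rw [one_div, ENNReal.rpow_inv_lt_iff (by positivity), ENNReal.rpow_natCast] at hk
    exact_mod_cast hk.le
  exact squeeze_zero_norm' hbound (tendsto_pow_atTop_nhds_zero_of_lt_one r.2 (by exact_mod_cast hr))

theorem tendsto_pow_of_spectralRadius_sub_lt_one (haq : a * q = q) (hqa : q * a = q)
    (hq : IsIdempotentElem q) (h : spectralRadius ℂ (a - q) < 1) :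
    Tendsto (a ^ ·) atTop (𝓝 q) := by
  rw [← tendsto_add_atTop_iff_nat 1]
  simpa only [sub_pow_succ_of_mul_eq haq hqa hq, sub_add_cancel, zero_add] using
    ((tendsto_add_atTop_iff_nat 1).2 (tendsto_pow_zero_of_spectralRadius_lt_one h)).add_const q

end ComplexBanachAlgebra

end PowerLimits

section ApproximateInverse

theorem isUnit_of_isUnit_mul_of_isUnit_mul {M : Type*} [Monoid M] {a b : M} (hab : IsUnit (a * b))
    (hba : IsUnit (b * a)) : IsUnit a := by
  obtain ⟨u, hu⟩ := hab
  obtain ⟨v, hv⟩ := hba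
  refine isUnit_iff_exists_and_exists.2 ⟨⟨b * ↑u⁻¹, ?_⟩, ⟨↑v⁻¹ * b, ?_⟩⟩
  · rw [← mul_assoc, ← hu, u.mul_inv]
  · rw [mul_assoc, ← hv, v.inv_mul]

variable {α R : Type*} [NormedRing R] [HasSummableGeomSeries R] {l : Filter α} {f g : α → R}

theorem eventually_isUnit_of_tendsto {a : R} (ha : IsUnit a) (h : Tendsto f l (𝓝 a)) :
    ∀ᶠ x in l, IsUnit (f x) :=
  h.eventually (Units.isOpen.mem_nhds ha)

theorem isBigO_inverse_sub_units_inv {u : Rˣ} (h : Tendsto f l (𝓝 u)) :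
    (fun x => Ring.inverse (f x) - ↑u⁻¹) =O[l] fun x => f x - u := by
  have hsub : Tendsto (fun x => f x - u) l (𝓝 0) := tendsto_sub_nhds_zero_iff.2 h
  simpa only [Function.comp_def, add_sub_cancel] using
    ((NormedRing.inverse_add_norm_diff_first_order u).comp_tendsto hsub).of_norm_right

theorem isBigO_inverse_sub (hfg : Tendsto (fun x => f x * g x) l (𝓝 1))
    (hf : ∀ᶠ x in l, IsUnit (f x)) :
    (fun x => Ring.inverse (f x) - g x) =O[l] fun x => ‖g x‖ * ‖f x * g x - 1‖ := by
  have hfactor : (fun x => g x * (Ring.inverse (f x * g x) - 1)) =ᶠ[l]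
      fun x => Ring.inverse (f x) - g x := by
    filter_upwards [hf, eventually_isUnit_of_tendsto isUnit_one hfg] with x hfx hfgx
    rw [mul_sub, mul_one, ← Ring.inverse_mul_cancel_left _ (g x * _) hfx, ← mul_assoc (f x),
      Ring.mul_inverse_cancel _ hfgx, mul_one]
  have hinv : (fun x => Ring.inverse (f x * g x) - 1) =O[l] fun x => f x * g x - 1 := by
    simpa only [inv_one, Units.val_one] using isBigO_inverse_sub_units_inv (u := 1) hfg
  exact ((isBigO_refl g l).norm_right.mul hinv.norm_right).congr' hfactor .rfl

end ApproximateInverse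

section SimplePole

theorem exists_mul_add_mul_eq_one {R : Type*} [Ring R] {q t e r : R}
    (hq : IsIdempotentElem q) (htq : t * q = 0) (hqt : q * t = 0) (hu : IsUnit (t + q))
    (hqr : q * r = r) (hrq : r * q = r) (hqer : q * e * r = q) (hreq : r * e * q = q) :
    ∃ s, t * s + e * r = 1 ∧ s * t + r * e = 1 := by
  obtain ⟨d, hd, hd'⟩ := isUnit_iff_exists.1 hu
  have hqd : q * d = q := by
    calc q * d = q * (t + q) * d := by rw [mul_add, hqt, zero_add, hq.eq]
      _ = q := by rw [mul_assoc, hd, mul_one]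
  have hdq : d * q = q := by
    calc d * q = d * ((t + q) * q) := by rw [add_mul, htq, zero_add, hq.eq]
      _ = q := by rw [← mul_assoc, hd', one_mul]
  have htd : t * d = 1 - q := by rw [eq_sub_iff_add_eq, ← hd, add_mul, hqd]
  have hdt : d * t = 1 - q := by rw [eq_sub_iff_add_eq, ← hd', mul_add, hdq]
  have htr : t * r = 0 := by rw [← hqr, ← mul_assoc, htq, zero_mul]
  have hrt : r * t = 0 := by rw [← hrq, mul_assoc, hqt, mul_zero]
  -- `d` inverts `t` modulo `q`, and the outer factors satisfy `q * (1 - e * r) = 0` and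
  -- `(1 - r * e) * q = 0`.
  refine ⟨(1 - r * e) * d * (1 - e * r), ?_, ?_⟩
  · calc t * ((1 - r * e) * d * (1 - e * r)) + e * r
      _ = (t - t * r * e) * d * (1 - e * r) + e * r := by noncomm_ring
      _ = t * d * (1 - e * r) + e * r := by rw [htr, zero_mul, sub_zero]
      _ = 1 - q + q * e * r := by rw [htd]; noncomm_ring
      _ = 1 := by rw [hqer, sub_add_cancel]
  · calc (1 - r * e) * d * (1 - e * r) * t + r * e
      _ = (1 - r * e) * d * (t - e * (r * t)) + r * e := by noncomm_ring
      _ = (1 - r * e) * (d * t) + r * e := by rw [hrt, mul_zero, sub_zero, mul_assoc]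
      _ = 1 - q + r * e * q := by rw [hdt]; noncomm_ring
      _ = 1 := by rw [hreq, sub_add_cancel]

variable {α 𝕜 R : Type*} [NormedField 𝕜] [NormedRing R] [NormedAlgebra 𝕜 R]
  {l : Filter α} {c : α → 𝕜} {f : α → R} {t e r s : R}

theorem isBigO_inv_smul_add (hc : Tendsto c l (𝓝[≠] 0)) (r s : R) :
    (fun x => (c x)⁻¹ • r + s) =O[l] fun x => (c x)⁻¹ := by
  have hc0 : ∀ᶠ x in l, c x ≠ 0 := hc.eventually self_mem_nhdsWithin
  have hone : (fun _ => (1 : 𝕜)) =O[l] fun x => (c x)⁻¹ := by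
    simpa only [inv_one] using ((hc.mono_right nhdsWithin_le_nhds).isBigO_one 𝕜).inv_rev
      (hc0.mono fun x hx h => absurd h hx)
  have hr : (fun x => (c x)⁻¹ • r) =O[l] fun x => (c x)⁻¹ := by
    simpa using (isBigO_refl (fun x => (c x)⁻¹) l).smul (isBigO_const_one 𝕜 r l)
  exact hr.add ((isBigO_const_one 𝕜 s l).trans hone)

theorem isBigO_mul_inv_smul_add_sub_one (hc : Tendsto c l (𝓝[≠] 0))
    (hf : (fun x => f x - (t + c x • e)) =O[l] fun x => c x ^ 2)
    (htr : t * r = 0) (hts : t * s + e * r = 1) :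
    (fun x => f x * ((c x)⁻¹ • r + s) - 1) =O[l] c := by
  have hc0 : ∀ᶠ x in l, c x ≠ 0 := hc.eventually self_mem_nhdsWithin
  have hexp : (fun x => c x • (e * s) + (f x - (t + c x • e)) * ((c x)⁻¹ • r + s)) =ᶠ[l]
      fun x => f x * ((c x)⁻¹ • r + s) - 1 := by
    filter_upwards [hc0] with x hx
    have hmain : (t + c x • e) * ((c x)⁻¹ • r + s) = 1 + c x • (e * s) := by
      rw [add_mul, mul_add, mul_add, mul_smul_comm, htr, smul_zero, zero_add, smul_mul_smul_comm,
        mul_inv_cancel₀ hx, one_smul, smul_mul_assoc, ← add_assoc, hts]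
    rw [sub_mul, hmain]
    abel
  have hlin : (fun x => c x • (e * s)) =O[l] c := by
    simpa using (isBigO_refl c l).smul (isBigO_const_one 𝕜 (e * s) l)
  have hrem : (fun x => (f x - (t + c x • e)) * ((c x)⁻¹ • r + s)) =O[l] c :=
    (hf.mul (isBigO_inv_smul_add hc r s)).congr' .rfl <| by
      filter_upwards [hc0] with x hx
      rw [pow_two, mul_inv_cancel_right₀ hx]
  exact (hlin.add hrem).congr' hexp .rfl

theorem isBigO_inv_smul_add_mul_sub_one (hc : Tendsto c l (𝓝[≠] 0))
    (hf : (fun x => f x - (t + c x • e)) =O[l] fun x => c x ^ 2)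
    (hrt : r * t = 0) (hst : s * t + r * e = 1) :
    (fun x => ((c x)⁻¹ • r + s) * f x - 1) =O[l] c := by
  have hfop : (fun x => MulOpposite.op (f x) - (.op t + c x • .op e)) =O[l] fun x => c x ^ 2 :=
    .of_norm_left (by exact hf.norm_left)
  have hop := isBigO_mul_inv_smul_add_sub_one hc hfop (congrArg MulOpposite.op hrt)
    (congrArg MulOpposite.op hst)
  exact .of_norm_left (by exact hop.norm_left)

variable [HasSummableGeomSeries R]

theorem eventually_isUnit_and_isBigO_inverse_sub_inv_smul (hc : Tendsto c l (𝓝[≠] 0))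
    (hf : (fun x => f x - (t + c x • e)) =O[l] fun x => c x ^ 2)
    (htr : t * r = 0) (hrt : r * t = 0) (hts : t * s + e * r = 1) (hst : s * t + r * e = 1) :
    (∀ᶠ x in l, IsUnit (f x)) ∧
      (fun x => Ring.inverse (f x) - (c x)⁻¹ • r) =O[l] fun _ => (1 : 𝕜) := by
  have hc0 : ∀ᶠ x in l, c x ≠ 0 := hc.eventually self_mem_nhdsWithin
  have hczero : Tendsto c l (𝓝 0) := hc.mono_right nhdsWithin_le_nhds
  have hfg := isBigO_mul_inv_smul_add_sub_one hc hf htr hts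
  have hgf := isBigO_inv_smul_add_mul_sub_one hc hf hrt hst
  have hfg_lim := tendsto_sub_nhds_zero_iff.1 (hfg.trans_tendsto hczero)
  have hgf_lim := tendsto_sub_nhds_zero_iff.1 (hgf.trans_tendsto hczero)
  have hunit : ∀ᶠ x in l, IsUnit (f x) := by
    filter_upwards [eventually_isUnit_of_tendsto isUnit_one hfg_lim,
      eventually_isUnit_of_tendsto isUnit_one hgf_lim] with x
      using isUnit_of_isUnit_mul_of_isUnit_mul
  have hdiff : (fun x => Ring.inverse (f x) - ((c x)⁻¹ • r + s)) =O[l] fun _ => (1 : 𝕜) := by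
    refine ((isBigO_inverse_sub hfg_lim hunit).trans
      ((isBigO_inv_smul_add hc r s).norm_left.mul hfg.norm_left)).congr' .rfl ?_
    filter_upwards [hc0] with x hx using inv_mul_cancel₀ hx
  refine ⟨hunit, (hdiff.add (isBigO_const_one 𝕜 s l)).congr_left fun x => ?_⟩
  rw [← sub_sub, sub_add_cancel]

theorem eventually_isUnit_and_isBigO_inverse_sub_inv_smul_of_tendsto_pow {a q : R}
    (hc : Tendsto c l (𝓝[≠] 0)) (ha : Tendsto (a ^ ·) atTop (𝓝 q))
    (hf : (fun x => f x - (1 - a + c x • e)) =O[l] fun x => c x ^ 2)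
    (hqr : q * r = r) (hrq : r * q = r) (hqer : q * e * r = q) (hreq : r * e * q = q) :
    (∀ᶠ x in l, IsUnit (f x)) ∧
      (fun x => Ring.inverse (f x) - (c x)⁻¹ • r) =O[l] fun _ => (1 : 𝕜) := by
  have haq : (1 - a) * q = 0 := by rw [sub_mul, one_mul, mul_eq_right_of_tendsto_pow ha, sub_self]
  have hqa : q * (1 - a) = 0 := by rw [mul_sub, mul_one, mul_eq_left_of_tendsto_pow ha, sub_self]
  obtain ⟨s, hts, hst⟩ := exists_mul_add_mul_eq_one (isIdempotentElem_of_tendsto_pow ha)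
    haq hqa (isUnit_one_sub_add_of_tendsto_pow ha) hqr hrq hqer hreq
  have htr : (1 - a) * r = 0 := by rw [← hqr, ← mul_assoc, haq, zero_mul]
  have hrt : r * (1 - a) = 0 := by rw [← hrq, mul_assoc, hqa, mul_zero]
  exact eventually_isUnit_and_isBigO_inverse_sub_inv_smul hc hf htr hrt hts hst

end SimplePole

section RankFactorization

theorem eventually_isUnit_and_isBigO_inv_sub_mul_inv_mul_of_tendsto_pow {α 𝕜 n p : Type*}
    [RCLike 𝕜] [Fintype n] [DecidableEq n] [Fintype p] [DecidableEq p] {l : Filter α}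
    {c : α → 𝕜} {f : α → Matrix n n 𝕜} {a e : Matrix n n 𝕜} {V : Matrix n p 𝕜} {W : Matrix p n 𝕜}
    (hc : Tendsto c l (𝓝[≠] 0)) (hWV : W * V = 1) (ha : Tendsto (a ^ ·) atTop (𝓝 (V * W)))
    (hf : (fun x => f x - (1 - a + c x • e)) =O[l] fun x => c x ^ 2)
    (hWeV : IsUnit (W * e * V)) :
    (∀ᶠ x in l, IsUnit (f x)) ∧
      (fun x => (f x)⁻¹ - V * (c x • (W * e * V))⁻¹ * W) =O[l] fun _ => (1 : 𝕜) := by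
  have hdet := (isUnit_iff_isUnit_det _).1 hWeV
  have hinv_left : (W * e * V)⁻¹ * (W * e * V) = 1 := nonsing_inv_mul _ hdet
  have hinv_right : (W * e * V) * (W * e * V)⁻¹ = 1 := mul_nonsing_inv _ hdet
  set Y := (W * e * V)⁻¹
  have hqr : V * W * (V * Y * W) = V * Y * W := by
    rw [Matrix.mul_assoc V W, Matrix.mul_assoc V Y, ← Matrix.mul_assoc W, hWV, Matrix.one_mul]
  have hrq : V * Y * W * (V * W) = V * Y * W := by
    rw [Matrix.mul_assoc (V * Y), ← Matrix.mul_assoc W, hWV, Matrix.one_mul]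
  have hqer : V * W * e * (V * Y * W) = V * W := by
    calc V * W * e * (V * Y * W) = V * (W * e * V * Y) * W := by simp only [Matrix.mul_assoc]
      _ = V * W := by rw [hinv_right, Matrix.mul_one]
  have hreq : V * Y * W * e * (V * W) = V * W := by
    calc V * Y * W * e * (V * W) = V * (Y * (W * e * V)) * W := by simp only [Matrix.mul_assoc]
      _ = V * W := by rw [hinv_left, Matrix.mul_one]
  refine (eventually_isUnit_and_isBigO_inverse_sub_inv_smul_of_tendsto_pow hc ha hf hqr hrq hqer
    hreq).imp_right fun h => h.congr' ?_ .rfl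
  filter_upwards [hc.eventually self_mem_nhdsWithin] with x hx
  have hsmul : (c x • (W * e * V))⁻¹ = (c x)⁻¹ • Y := inv_smul' _ (Units.mk0 (c x) hx) hdet
  rw [← nonsing_inv_eq_ringInverse, hsmul, Matrix.mul_smul, Matrix.smul_mul]

theorem tendsto_pow_mul_of_spectralRadius_sub_lt_one {m p : Type*} [Fintype m] [DecidableEq m]
    [Fintype p] [DecidableEq p] {A : Matrix m m ℂ} {V : Matrix m p ℂ} {W : Matrix p m ℂ}
    (hWV : W * V = 1) (hAV : A * V = V) (hWA : W * A = W)
    (hρ : spectralRadius ℂ (A - V * W) < 1) : Tendsto (A ^ ·) atTop (𝓝 (V * W)) := by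
  refine tendsto_pow_of_spectralRadius_sub_lt_one ?_ ?_ ?_ hρ
  · rw [← Matrix.mul_assoc, hAV]
  · rw [Matrix.mul_assoc, hWA]
  · rw [IsIdempotentElem, Matrix.mul_assoc, ← Matrix.mul_assoc W, hWV, Matrix.one_mul]

end RankFactorization

section VecMatrices

section CommSemiring

variable {R l m n p : Type*} [CommSemiring R]

/-- The matrix of the Lyapunov operator `X ↦ h * X + X * h` with respect to column-stacking `vec`;
the paper's `Z_μ` is `lyapunovMatrix (μ • (Uᴴ * H * U))`. -/
def lyapunovMatrix [DecidableEq n] (h : Matrix n n R) : Matrix (n × n) (n × n) R :=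
  1 ⊗ₖ h + hᵀ ⊗ₖ 1

theorem lyapunovMatrix_smul [DecidableEq n] (c : R) (h : Matrix n n R) :
    lyapunovMatrix (c • h) = c • lyapunovMatrix h := by
  rw [lyapunovMatrix, lyapunovMatrix, transpose_smul, kronecker_smul, smul_kronecker, smul_add]

variable [StarRing R]

/-- The matrix of `X ↦ Bᴴ * X * B` with respect to column-stacking `vec`; the paper's `F_μ` is
`conjugationMatrix B_μ`. -/
def conjugationMatrix (B : Matrix m n R) : Matrix (n × n) (m × m) R :=
  Bᵀ ⊗ₖ Bᴴ

/-- The polarization of the quadratic map `conjugationMatrix`: the matrix of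
`X ↦ Bᴴ * X * A + Aᴴ * X * B` with respect to column-stacking `vec`. -/
def conjugationPolarMatrix (A B : Matrix m n R) : Matrix (n × n) (m × m) R :=
  Aᵀ ⊗ₖ Bᴴ + Bᵀ ⊗ₖ Aᴴ

theorem conjugationMatrix_one [DecidableEq n] :
    conjugationMatrix (1 : Matrix n n R) = 1 := by
  rw [conjugationMatrix, transpose_one, conjTranspose_one, one_kronecker_one]

theorem conjugationMatrix_mul [Fintype n] (A : Matrix m n R) (B : Matrix n p R) :
    conjugationMatrix (A * B) = conjugationMatrix B * conjugationMatrix A := by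
  simp only [conjugationMatrix, transpose_mul, conjTranspose_mul, mul_kronecker_mul]

theorem conjugationMatrix_pow [Fintype n] [DecidableEq n] (B : Matrix n n R) (k : ℕ) :
    conjugationMatrix (B ^ k) = conjugationMatrix B ^ k := by
  induction k with
  | zero => rw [pow_zero, pow_zero, conjugationMatrix_one]
  | succ k ih => rw [pow_succ', conjugationMatrix_mul, ih, pow_succ]

theorem conjugationMatrix_add_smul {c : R} (hc : IsSelfAdjoint c) (A B : Matrix m n R) :
    conjugationMatrix (A + c • B) =
      conjugationMatrix A + c • conjugationPolarMatrix A B + c ^ 2 • conjugationMatrix B := by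
  simp only [conjugationMatrix, conjugationPolarMatrix, transpose_add, transpose_smul,
    conjTranspose_add, conjTranspose_smul, hc.star_eq, add_kronecker, kronecker_add,
    smul_kronecker, kronecker_smul]
  module

theorem conjugationMatrix_mul_conjugationPolarMatrix_mul [Fintype m] [Fintype n]
    (A B : Matrix m n R) (C : Matrix n p R) (D : Matrix l m R) :
    conjugationMatrix C * conjugationPolarMatrix A B * conjugationMatrix D =
      conjugationPolarMatrix (D * A * C) (D * B * C) := by
  simp only [conjugationMatrix, conjugationPolarMatrix, Matrix.mul_add, Matrix.add_mul,
    ← mul_kronecker_mul, transpose_mul, conjTranspose_mul, Matrix.mul_assoc]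

theorem conjugationPolarMatrix_one_left [DecidableEq n] {h : Matrix n n R} (hh : h.IsHermitian) :
    conjugationPolarMatrix 1 h = lyapunovMatrix h := by
  rw [conjugationPolarMatrix, lyapunovMatrix, transpose_one, conjTranspose_one, hh.eq]

theorem continuous_conjugationMatrix [TopologicalSpace R] [ContinuousMul R] [ContinuousStar R] :
    Continuous (conjugationMatrix : Matrix m n R → Matrix (n × n) (m × m) R) :=
  continuous_matrix fun i j =>
    (continuous_id.matrix_elem j.1 i.1).mul (continuous_id.matrix_elem j.2 i.2).star

theorem tendsto_conjugationMatrix_pow [Fintype n] [DecidableEq n] [TopologicalSpace R]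
    [ContinuousMul R] [ContinuousStar R] {A Q : Matrix n n R} (h : Tendsto (A ^ ·) atTop (𝓝 Q)) :
    Tendsto (conjugationMatrix A ^ ·) atTop (𝓝 (conjugationMatrix Q)) := by
  simpa only [Function.comp_def, conjugationMatrix_pow] using
    (continuous_conjugationMatrix.tendsto Q).comp h

end CommSemiring

theorem posDef_lyapunovMatrix {𝕜 n : Type*} [RCLike 𝕜] [Finite n] [DecidableEq n]
    {h : Matrix n n 𝕜} (hh : h.PosDef) : (lyapunovMatrix h).PosDef := by
  have := Fintype.ofFinite n
  exact (PosDef.one.kronecker hh).add (hh.transpose.kronecker PosDef.one)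

end VecMatrices

section LowRankApproximation

variable {m p : Type*} [Fintype m] [DecidableEq m] [Fintype p] [DecidableEq p]
  {U : Matrix m p ℂ} {A X : Matrix m m ℂ}

theorem isBigO_one_sub_conjugationMatrix_sub_smul_sub (l : Filter ℝ) (A X : Matrix m m ℂ) :
    (fun μ : ℝ => 1 - conjugationMatrix (A - (μ : ℂ) • X) -
      (1 - conjugationMatrix A + (μ : ℂ) • conjugationPolarMatrix A X))
      =O[l] fun μ => (μ : ℂ) ^ 2 := by
  have hexp (μ : ℝ) : 1 - conjugationMatrix (A - (μ : ℂ) • X) -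
      (1 - conjugationMatrix A + (μ : ℂ) • conjugationPolarMatrix A X) =
      (μ : ℂ) ^ 2 • -conjugationMatrix X := by
    have hself : IsSelfAdjoint (-(μ : ℂ)) := IsSelfAdjoint.neg (Complex.conj_ofReal μ)
    rw [sub_eq_add_neg A, ← neg_smul, conjugationMatrix_add_smul hself]
    module
  simpa only [hexp, smul_eq_mul, mul_one] using
    (isBigO_refl (fun μ : ℝ => (μ : ℂ) ^ 2) l).smul (isBigO_const_one ℂ (-conjugationMatrix X) l)

theorem eventually_isUnit_and_isBigO_inv_one_sub_conjugationMatrix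
    (hUU : Uᴴ * U = 1) (hAU : A * U = U) (hUA : Uᴴ * A = Uᴴ)
    (hρ : spectralRadius ℂ (A - U * Uᴴ) < 1) (hX : (Uᴴ * X * U).PosDef) :
    (∀ᶠ μ : ℝ in 𝓝[≠] 0, IsUnit (1 - conjugationMatrix (A - (μ : ℂ) • X))) ∧
      (fun μ : ℝ => (1 - conjugationMatrix (A - (μ : ℂ) • X))⁻¹ -
        conjugationMatrix Uᴴ * (lyapunovMatrix ((μ : ℂ) • (Uᴴ * X * U)))⁻¹ * conjugationMatrix U)
        =O[𝓝[≠] 0] fun _ => (1 : ℂ) := by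
  have hc : Tendsto ((↑) : ℝ → ℂ) (𝓝[≠] 0) (𝓝[≠] 0) :=
    Complex.continuous_ofReal.continuousWithinAt.tendsto_nhdsWithin
      fun _ => Complex.ofReal_ne_zero.2
  have hWV : conjugationMatrix U * conjugationMatrix Uᴴ = 1 := by
    rw [← conjugationMatrix_mul, hUU, conjugationMatrix_one]
  have hpow : Tendsto (conjugationMatrix A ^ ·) atTop
      (𝓝 (conjugationMatrix Uᴴ * conjugationMatrix U)) := by
    rw [← conjugationMatrix_mul]
    exact tendsto_conjugationMatrix_pow
      (tendsto_pow_mul_of_spectralRadius_sub_lt_one hUU hAU hUA hρ)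
  have hcompr : conjugationMatrix U * conjugationPolarMatrix A X * conjugationMatrix Uᴴ =
      lyapunovMatrix (Uᴴ * X * U) := by
    rw [conjugationMatrix_mul_conjugationPolarMatrix_mul, hUA, hUU,
      conjugationPolarMatrix_one_left hX.isHermitian]
  simpa only [hcompr, lyapunovMatrix_smul] using
    eventually_isUnit_and_isBigO_inv_sub_mul_inv_mul_of_tendsto_pow hc hWV hpow
      (isBigO_one_sub_conjugationMatrix_sub_smul_sub _ A X)
      (hcompr ▸ (posDef_lyapunovMatrix hX).isUnit)

end LowRankApproximation

theorem posDef_of_posSemidef_sub_smul_one {𝕜 n : Type*} [RCLike 𝕜] [Finite n] [DecidableEq n]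
    {X : Matrix n n 𝕜} {c : 𝕜} (hc : 0 < c) (h : (X - c • 1).PosSemidef) : X.PosDef := by
  have := Fintype.ofFinite n
  simpa only [sub_add_cancel] using PosDef.posSemidef_add h (PosDef.one.smul hc)

theorem low_rank_approximation_part_ii_general
    {m p : Type*} [Fintype m] [DecidableEq m] [Fintype p] [DecidableEq p]
    (U : Matrix m p ℂ) (A H : Matrix m m ℂ)
    (hUU : Uᴴ * U = 1) (hAU : A * U = U) (hUA : Uᴴ * A = Uᴴ)
    (hρ : spectralRadius ℂ (A - U * Uᴴ) < 1) (hH : (Uᴴ * H * U).PosDef) :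
    ∃ μ₀ : ℝ, 0 < μ₀ ∧ ∃ C : ℝ, 0 < C ∧ ∀ μ : ℝ, μ ≠ 0 → |μ| < μ₀ →
      IsUnit (1 - (A * (1 - (μ : ℂ) • H))ᵀ ⊗ₖ (A * (1 - (μ : ℂ) • H))ᴴ) ∧
      IsUnit ((1 : Matrix p p ℂ) ⊗ₖ ((μ : ℂ) • (Uᴴ * H * U)) +
        ((μ : ℂ) • (Uᴴ * H * U))ᵀ ⊗ₖ (1 : Matrix p p ℂ)) ∧
      cSpecNorm
        ((1 - (A * (1 - (μ : ℂ) • H))ᵀ ⊗ₖ (A * (1 - (μ : ℂ) • H))ᴴ)⁻¹ -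
          (U.map (starRingEnd ℂ)) ⊗ₖ U *
            ((1 : Matrix p p ℂ) ⊗ₖ ((μ : ℂ) • (Uᴴ * H * U)) +
              ((μ : ℂ) • (Uᴴ * H * U))ᵀ ⊗ₖ (1 : Matrix p p ℂ))⁻¹ *
            (Uᵀ ⊗ₖ Uᴴ)) ≤ C := by
  have hAH : Uᴴ * (A * H) * U = Uᴴ * H * U := by rw [← Matrix.mul_assoc Uᴴ, hUA]
  have hV : conjugationMatrix Uᴴ = U.map (starRingEnd ℂ) ⊗ₖ U :=
    congrArg (Uᴴᵀ ⊗ₖ ·) (conjTranspose_conjTranspose U)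
  obtain ⟨hunit, hO⟩ := eventually_isUnit_and_isBigO_inv_one_sub_conjugationMatrix hUU hAU hUA hρ
    (hAH.symm ▸ hH)
  obtain ⟨C, hC, hbound⟩ := hO.exists_pos
  obtain ⟨μ₀, hμ₀, hμ⟩ := Metric.eventually_nhds_iff.1
    (eventually_nhdsWithin_iff.1 (hunit.and hbound.bound))
  refine ⟨μ₀, hμ₀, C, hC, fun μ hne hlt => ?_⟩
  have hZ : IsUnit (lyapunovMatrix ((μ : ℂ) • (Uᴴ * H * U))) := by
    rw [lyapunovMatrix_smul]
    exact (posDef_lyapunovMatrix hH).isUnit.smul (Units.mk0 _ (Complex.ofReal_ne_zero.2 hne))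
  obtain ⟨hF, hle⟩ := hμ (by rwa [Real.dist_0_eq_abs]) hne
  rw [hAH, hV, norm_one, mul_one] at hle
  rw [Matrix.mul_sub, Matrix.mul_one, Matrix.mul_smul]
  exact ⟨hF, hZ, hle⟩

/-- **Low-rank approximation lemma, part (ii).**
Setting: `M ≥ P ≥ 1`; `U ∈ ℂ^{M×P}` has orthonormal columns, `A` satisfies `AU = U`,
`UᴴA = Uᴴ` and `ρ(A - UUᴴ) < 1`; `H` is Hermitian with `0 ≤ H ≤ δI` and `νI_P ≤ UᴴHU`,
`0 < ν ≤ δ`; `B_μ = A(I - μH)`, `F_μ = B_μᵀ ⊗ B_μᴴ`, and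
`Z_μ = I_P ⊗ (μ UᴴHU) + (μ UᴴHU)ᵀ ⊗ I_P`, which is invertible.  Conclusion: there exist
`μ₀ > 0` and `C > 0` such that for all `μ ∈ (0, μ₀)`:
`‖(I - F_μ)⁻¹ - (conj U ⊗ U) Z_μ⁻¹ (Uᵀ ⊗ Uᴴ)‖ ≤ C`. -/
theorem low_rank_approximation_part_ii
    {M P : ℕ} (hP : 1 ≤ P) (hPM : P ≤ M)
    (U : Matrix (Fin M) (Fin P) ℂ) (A H : Matrix (Fin M) (Fin M) ℂ)
    (ν δ : ℝ) (hν : 0 < ν) (hνδ : ν ≤ δ)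
    (hUU : Uᴴ * U = 1)
    (hAU : A * U = U)
    (hUA : Uᴴ * A = Uᴴ)
    (hρ : spectralRadius ℂ (A - U * Uᴴ) < 1)
    (hH0 : H.PosSemidef)
    (hHδ : ((δ : ℂ) • (1 : Matrix (Fin M) (Fin M) ℂ) - H).PosSemidef)
    (hHν : (Uᴴ * H * U - (ν : ℂ) • (1 : Matrix (Fin P) (Fin P) ℂ)).PosSemidef) :
    ∃ μ₀ : ℝ, 0 < μ₀ ∧ ∃ C : ℝ, 0 < C ∧ ∀ μ : ℝ, 0 < μ → μ < μ₀ →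
      IsUnit ((1 : Matrix (Fin P) (Fin P) ℂ) ⊗ₖ ((μ : ℂ) • (Uᴴ * H * U)) +
          ((μ : ℂ) • (Uᴴ * H * U))ᵀ ⊗ₖ (1 : Matrix (Fin P) (Fin P) ℂ)) ∧
      cSpecNorm
        ((1 - (A * (1 - (μ : ℂ) • H))ᵀ ⊗ₖ (A * (1 - (μ : ℂ) • H))ᴴ)⁻¹ -
          (U.map (starRingEnd ℂ)) ⊗ₖ U *
            ((1 : Matrix (Fin P) (Fin P) ℂ) ⊗ₖ ((μ : ℂ) • (Uᴴ * H * U)) +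
              ((μ : ℂ) • (Uᴴ * H * U))ᵀ ⊗ₖ (1 : Matrix (Fin P) (Fin P) ℂ))⁻¹ *
            (Uᵀ ⊗ₖ Uᴴ)) ≤ C := by
  obtain ⟨μ₀, hμ₀, C, hC, h⟩ := low_rank_approximation_part_ii_general U A H hUU hAU hUA hρ
    (posDef_of_posSemidef_sub_smul_one (by exact_mod_cast hν) hHν)
  exact ⟨μ₀, hμ₀, C, hC, fun μ hμ hlt => (h μ hμ.ne' ((abs_of_pos hμ).trans_lt hlt)).2⟩
end

section
/- Stability of the coefficient matrix B. There exists μ₀ > 0 such that for every μ ∈ (0, μ₀), the matrix B_μ = A(I_M − μH) has spectral radius ρ(B_μ) < 1. -/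
/-!
Write `K = A - U V`, so that `A = U V + K` with `V U = 1`, `V K = 0` and `K U = 0`. If
`ρ(A - μE) ≥ 1` for arbitrarily small `μ > 0`, there are unit vectors `v` and scalars `z` in the
closed unit disc with `v = z (A - μE) v`, and by compactness they converge along a sequence
`μ → 0`. As `ρ(K) < 1`, the limits are `1` and a vector `U a` with `a ≠ 0`. Applying `V` gives
`((z - 1) / μ) V v = z V E v`, so `(z - 1) / μ` converges to an eigenvalue `θ` of `V E U`. Since
`Re z ≤ |z| ≤ 1`, this forces `Re θ ≤ 0`, which is excluded when the spectrum of `V E U` lies in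
the open right half-plane. For `E = A H` and `V = Uᴴ` the matrix `V E U` is `Uᴴ H U ≥ ν`.
-/

open Matrix
open scoped ComplexOrder

open Filter Topology

section Spectrum

variable {n : Type*} [Fintype n] [DecidableEq n]

lemma mem_spectrum_iff_exists_mulVec_eq_smul {𝕜 : Type*} [Field 𝕜] {G : Matrix n n 𝕜} {θ : 𝕜} :
    θ ∈ spectrum 𝕜 G ↔ ∃ v ≠ 0, G *ᵥ v = θ • v := by
  rw [spectrum.mem_iff, isUnit_iff_isUnit_det, isUnit_iff_ne_zero, not_not,
    ← exists_mulVec_eq_zero_iff]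
  simp only [Algebra.algebraMap_eq_smul_one, sub_mulVec, smul_mulVec, one_mulVec, sub_eq_zero,
    eq_comm]

lemma spectralRadius_lt_iff_of_finite {𝕜 A : Type*} [NormedField 𝕜] [Ring A] [Algebra 𝕜 A]
    {a : A} (ha : (spectrum 𝕜 a).Finite) {r : ENNReal} (hr : 0 < r) :
    spectralRadius 𝕜 a < r ↔ ∀ z ∈ spectrum 𝕜 a, (‖z‖₊ : ENNReal) < r := by
  have hsup : spectralRadius 𝕜 a = ha.toFinset.sup fun z => (‖z‖₊ : ENNReal) := by
    simp [spectralRadius, Finset.sup_eq_iSup]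
  simp [hsup, Finset.sup_lt_iff (bot_eq_zero (α := ENNReal) ▸ hr)]

-- Inverting the eigenvalue, `z = θ⁻¹`, confines it to a compact set.
lemma spectralRadius_lt_one_iff_forall_smul_mulVec_eq {𝕜 : Type*} [NormedField 𝕜]
    {B : Matrix n n 𝕜} :
    spectralRadius 𝕜 B < 1 ↔ ∀ (z : 𝕜) (v : n → 𝕜), ‖z‖ ≤ 1 → z • (B *ᵥ v) = v → v = 0 := by
  rw [spectralRadius_lt_iff_of_finite B.finite_spectrum one_pos]
  constructor
  · intro h z v hz hv
    by_contra hv0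
    have hz0 : z ≠ 0 := by
      rintro rfl
      exact hv0 (by simpa using hv.symm)
    have hmem : z⁻¹ ∈ spectrum 𝕜 B :=
      mem_spectrum_iff_exists_mulVec_eq_smul.2 ⟨v, hv0, (eq_inv_smul_iff₀ hz0).2 hv⟩
    have hlt : ‖z‖⁻¹ < 1 := by
      rw [← norm_inv]
      exact_mod_cast h _ hmem
    exact hlt.not_ge ((one_le_inv₀ (norm_pos_iff.2 hz0)).2 hz)
  · intro h θ hθ
    obtain ⟨v, hv0, hv⟩ := mem_spectrum_iff_exists_mulVec_eq_smul.1 hθ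
    by_contra hge
    have hθ1 : 1 ≤ ‖θ‖ := by exact_mod_cast not_lt.1 hge
    have hθ0 : θ ≠ 0 := norm_pos_iff.1 (one_pos.trans_le hθ1)
    refine hv0 (h θ⁻¹ v ?_ ?_)
    · rw [norm_inv]
      exact inv_le_one_of_one_le₀ hθ1
    · rw [hv, inv_smul_smul₀ hθ0]

lemma le_re_of_mem_spectrum_of_posSemidef_sub {𝕜 : Type*} [RCLike 𝕜] {G : Matrix n n 𝕜} {ν : ℝ}
    (hG : (G - (ν : 𝕜) • (1 : Matrix n n 𝕜)).PosSemidef) {θ : 𝕜} (hθ : θ ∈ spectrum 𝕜 G) :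
    ν ≤ RCLike.re θ := by
  have hmem : θ - ν ∈ spectrum 𝕜 (G - (ν : 𝕜) • (1 : Matrix n n 𝕜)) := by
    rw [← Algebra.algebraMap_eq_smul_one, ← spectrum.sub_singleton_eq]
    exact Set.sub_mem_sub hθ rfl
  have h := (posSemidef_iff_isHermitian_and_spectrum_nonneg.1 hG).2 hmem
  simpa using (RCLike.nonneg_iff.1 h).1

end Spectrum

lemma exists_tendsto_of_tendsto_smul {𝕜 E ι : Type*} [NormedField 𝕜] [AddCommGroup E]
    [TopologicalSpace E] [Module 𝕜 E] [ContinuousSMul 𝕜 E] [SeparatingDual 𝕜 E]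
    {l : Filter ι} [l.NeBot] {q : ι → 𝕜} {x : ι → E} {a b : E} (ha : a ≠ 0)
    (hx : Tendsto x l (𝓝 a)) (hqx : Tendsto (fun i => q i • x i) l (𝓝 b)) :
    ∃ θ, Tendsto q l (𝓝 θ) ∧ b = θ • a := by
  obtain ⟨f, hf⟩ := SeparatingDual.exists_eq_one (R := 𝕜) ha
  have hfx : Tendsto (fun i => f (x i)) l (𝓝 1) := hf ▸ (f.continuous.tendsto a).comp hx
  have hq : Tendsto q l (𝓝 (f b)) := by
    have hdiv := ((f.continuous.tendsto b).comp hqx).div hfx one_ne_zero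
    rw [div_one] at hdiv
    refine hdiv.congr' ?_
    filter_upwards [hfx.eventually_ne one_ne_zero] with i hi
    simp [hi]
  have : T2Space E := SeparatingDual.t2Space (R := 𝕜)
  exact ⟨f b, hq, tendsto_nhds_unique hqx (hq.smul hx)⟩

lemma tendsto_mulVec {m n R ι : Type*} [Fintype n] [NonUnitalNonAssocSemiring R]
    [TopologicalSpace R] [ContinuousAdd R] [ContinuousMul R] {l : Filter ι} {v : ι → n → R}
    {v₀ : n → R} (B : Matrix m n R) (hv : Tendsto v l (𝓝 v₀)) :
    Tendsto (fun i => B *ᵥ v i) l (𝓝 (B *ᵥ v₀)) :=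
  ((continuous_const.matrix_mulVec continuous_id).tendsto v₀).comp hv

lemma div_smul_mulVec_eq_of_smul_sub_smul_mulVec_eq {n p 𝕜 : Type*} [Fintype n] [Field 𝕜]
    {A E : Matrix n n 𝕜} {V : Matrix p n 𝕜} (hVA : V * A = V) {z μ : 𝕜} (hμ : μ ≠ 0)
    {v : n → 𝕜} (hv : z • ((A - μ • E) *ᵥ v) = v) :
    ((z - 1) / μ) • (V *ᵥ v) = z • ((V * E) *ᵥ v) := by
  have hVv : z • (V *ᵥ v - μ • ((V * E) *ᵥ v)) = V *ᵥ v := by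
    conv_rhs => rw [← hv, mulVec_smul, mulVec_mulVec, Matrix.mul_sub, hVA, Matrix.mul_smul,
      sub_mulVec, smul_mulVec]
  rw [div_eq_inv_mul, mul_smul, inv_smul_eq_iff₀ hμ, sub_smul, one_smul]
  nth_rewrite 2 [← hVv]
  module

section Perturbation

variable {n p 𝕜 : Type*} [Fintype n] [Fintype p] [DecidableEq p]

lemma exists_mem_spectrum_re_nonpos_of_tendsto [RCLike 𝕜] {A E : Matrix n n 𝕜}
    {U : Matrix n p 𝕜} {V : Matrix p n 𝕜} (hVA : V * A = V) {ι : Type*} {l : Filter ι}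
    [l.NeBot] {μ : ι → ℝ} {z : ι → 𝕜} {v : ι → n → 𝕜} {v₀ : n → 𝕜}
    (hμ : ∀ᶠ i in l, 0 < μ i) (hz : Tendsto z l (𝓝 1)) (hv : Tendsto v l (𝓝 v₀))
    (hv₀ : v₀ ≠ 0) (hUVv₀ : U *ᵥ (V *ᵥ v₀) = v₀) (hz1 : ∀ i, ‖z i‖ ≤ 1)
    (hfix : ∀ i, z i • ((A - (μ i : 𝕜) • E) *ᵥ v i) = v i) :
    ∃ θ ∈ spectrum 𝕜 (V * E * U), RCLike.re θ ≤ 0 := by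
  have hVv₀ : V *ᵥ v₀ ≠ 0 := fun h => hv₀ (by rw [← hUVv₀, h, mulVec_zero])
  have hquot : Tendsto (fun i => ((z i - 1) / μ i) • (V *ᵥ v i)) l
      (𝓝 ((V * E * U) *ᵥ (V *ᵥ v₀))) := by
    rw [← mulVec_mulVec, hUVv₀, ← one_smul 𝕜 ((V * E) *ᵥ v₀)]
    refine (hz.smul (tendsto_mulVec (V * E) hv)).congr' ?_
    filter_upwards [hμ] with i hi
    exact (div_smul_mulVec_eq_of_smul_sub_smul_mulVec_eq hVA
      (by exact_mod_cast hi.ne') (hfix i)).symm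
  obtain ⟨θ, hθ, heig⟩ := exists_tendsto_of_tendsto_smul hVv₀ (tendsto_mulVec V hv) hquot
  refine ⟨θ, mem_spectrum_iff_exists_mulVec_eq_smul.2 ⟨_, hVv₀, heig⟩, ?_⟩
  refine le_of_tendsto ((RCLike.continuous_re.tendsto θ).comp hθ) ?_
  filter_upwards [hμ] with i hi
  rw [Function.comp_apply, RCLike.div_re_ofReal, map_sub, RCLike.one_re]
  exact div_nonpos_of_nonpos_of_nonneg
    (sub_nonpos.2 ((RCLike.re_le_norm _).trans (hz1 i))) hi.le

variable [DecidableEq n]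

lemma exists_tendsto_smul_mulVec_eq_of_frequently_not_spectralRadius_lt_one
    [RCLike 𝕜] {A E : Matrix n n 𝕜}
    (h : ∃ᶠ μ : ℝ in 𝓝[>] 0, ¬ spectralRadius 𝕜 (A - (μ : 𝕜) • E) < 1) :
    ∃ (μ : ℕ → ℝ) (z : ℕ → 𝕜) (v : ℕ → n → 𝕜) (z₀ : 𝕜) (v₀ : n → 𝕜),
      Tendsto μ atTop (𝓝[>] 0) ∧ Tendsto z atTop (𝓝 z₀) ∧ Tendsto v atTop (𝓝 v₀) ∧ v₀ ≠ 0 ∧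
      (∀ k, ‖z k‖ ≤ 1) ∧ ∀ k, z k • ((A - (μ k : 𝕜) • E) *ᵥ v k) = v k := by
  obtain ⟨μ, hμ, hbad⟩ := exists_seq_forall_of_frequently h
  have hunit : ∀ k, ∃ x ∈ Metric.closedBall (0 : 𝕜) 1 ×ˢ Metric.sphere (0 : n → 𝕜) 1,
      x.1 • ((A - (μ k : 𝕜) • E) *ᵥ x.2) = x.2 := by
    intro k
    have hk := hbad k
    rw [spectralRadius_lt_one_iff_forall_smul_mulVec_eq] at hk
    push Not at hk
    obtain ⟨z, v, hz, hv, hv0⟩ := hk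
    refine ⟨(z, (‖v‖⁻¹ : 𝕜) • v), ⟨by simpa using hz, by simp [norm_smul, hv0]⟩, ?_⟩
    simp only [mulVec_smul]
    rw [smul_comm, hv]
  choose x hx hfix using hunit
  obtain ⟨x₀, hx₀, φ, hφ, hlim⟩ :=
    ((isCompact_closedBall (0 : 𝕜) 1).prod (isCompact_sphere (0 : n → 𝕜) 1)).tendsto_subseq hx
  exact ⟨μ ∘ φ, fun k => (x (φ k)).1, fun k => (x (φ k)).2, x₀.1, x₀.2,
    hμ.comp hφ.tendsto_atTop, hlim.fst_nhds, hlim.snd_nhds,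
    ne_zero_of_mem_unit_sphere ⟨x₀.2, hx₀.2⟩,
    fun k => by simpa using (hx (φ k)).1, fun k => hfix (φ k)⟩

lemma eq_one_and_mulVec_eq_self_of_smul_mulVec_eq [NormedField 𝕜] {A : Matrix n n 𝕜}
    {U : Matrix n p 𝕜} {V : Matrix p n 𝕜} (hVU : V * U = 1) (hAU : A * U = U) (hVA : V * A = V)
    (hρ : spectralRadius 𝕜 (A - U * V) < 1) {z : 𝕜} {v : n → 𝕜} (hz : ‖z‖ ≤ 1) (hv0 : v ≠ 0)
    (hv : z • (A *ᵥ v) = v) :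
    z = 1 ∧ U *ᵥ (V *ᵥ v) = v := by
  have hVv : z • (V *ᵥ v) = V *ᵥ v := by
    conv_rhs => rw [← hv, mulVec_smul, mulVec_mulVec, hVA]
  have hcompl : (A - U * V) *ᵥ (v - U *ᵥ (V *ᵥ v)) = A *ᵥ v - U *ᵥ (V *ᵥ v) := by
    have hKU : (A - U * V) * U = 0 := by
      rw [Matrix.sub_mul, hAU, Matrix.mul_assoc, hVU, Matrix.mul_one, sub_self]
    rw [mulVec_sub, mulVec_mulVec, hKU, zero_mulVec, sub_zero, sub_mulVec, mulVec_mulVec]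
  have hUVv : U *ᵥ (V *ᵥ v) = v := by
    refine (sub_eq_zero.1 (spectralRadius_lt_one_iff_forall_smul_mulVec_eq.1 hρ z _ hz ?_)).symm
    rw [hcompl, smul_sub, hv, ← mulVec_smul, hVv]
  have hVv0 : V *ᵥ v ≠ 0 := by
    intro h
    rw [h, mulVec_zero] at hUVv
    exact hv0 hUVv.symm
  exact ⟨smul_left_injective 𝕜 hVv0 (hVv.trans (one_smul 𝕜 _).symm), hUVv⟩

variable [RCLike 𝕜] {A : Matrix n n 𝕜} {U : Matrix n p 𝕜} {V : Matrix p n 𝕜}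

theorem eventually_spectralRadius_sub_smul_lt_one {E : Matrix n n 𝕜} (hVU : V * U = 1)
    (hAU : A * U = U) (hVA : V * A = V) (hρ : spectralRadius 𝕜 (A - U * V) < 1)
    (hE : ∀ θ ∈ spectrum 𝕜 (V * E * U), 0 < RCLike.re θ) :
    ∀ᶠ μ : ℝ in 𝓝[>] 0, spectralRadius 𝕜 (A - (μ : 𝕜) • E) < 1 := by
  by_contra hfreq
  obtain ⟨μ, z, v, z₀, v₀, hμ, hz, hv, hv₀, hz1, hfix⟩ :=
    exists_tendsto_smul_mulVec_eq_of_frequently_not_spectralRadius_lt_one (not_eventually.1 hfreq)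
  have hμ0 : Tendsto (fun k => (μ k : 𝕜)) atTop (𝓝 0) :=
    RCLike.ofReal_zero (K := 𝕜) ▸ (RCLike.continuous_ofReal.tendsto 0).comp
      (hμ.mono_right nhdsWithin_le_nhds)
  have hfix₀ : z₀ • (A *ᵥ v₀) = v₀ := by
    have hlim := hz.smul ((tendsto_mulVec A hv).sub (hμ0.smul (tendsto_mulVec E hv)))
    rw [zero_smul, sub_zero] at hlim
    refine tendsto_nhds_unique (hlim.congr fun k => ?_) hv
    rw [← smul_mulVec, ← sub_mulVec, hfix]
  obtain ⟨rfl, hUVv₀⟩ := eq_one_and_mulVec_eq_self_of_smul_mulVec_eq hVU hAU hVA hρ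
    (le_of_tendsto' hz.norm hz1) hv₀ hfix₀
  obtain ⟨θ, hθ, hθre⟩ := exists_mem_spectrum_re_nonpos_of_tendsto hVA
    (hμ.eventually self_mem_nhdsWithin) hz hv hv₀ hUVv₀ hz1 hfix
  exact hθre.not_gt (hE θ hθ)

theorem stability_of_coefficient_matrix_B_general {H : Matrix n n 𝕜} (hVU : V * U = 1)
    (hAU : A * U = U) (hVA : V * A = V) (hρ : spectralRadius 𝕜 (A - U * V) < 1)
    (hH : ∀ θ ∈ spectrum 𝕜 (V * H * U), 0 < RCLike.re θ) :
    ∃ μ₀ : ℝ, 0 < μ₀ ∧ ∀ μ : ℝ, 0 < μ → μ < μ₀ →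
      spectralRadius 𝕜 (A * (1 - (μ : 𝕜) • H)) < 1 := by
  have hev := eventually_spectralRadius_sub_smul_lt_one (E := A * H) hVU hAU hVA hρ
    (by rwa [← Matrix.mul_assoc, hVA])
  obtain ⟨μ₀, hμ₀, hlt⟩ := mem_nhdsGT_iff_exists_Ioo_subset.1 hev
  refine ⟨μ₀, hμ₀, fun μ hμ hμlt => ?_⟩
  rw [Matrix.mul_sub, Matrix.mul_one, Matrix.mul_smul]
  exact hlt ⟨hμ, hμlt⟩

end Perturbation

/-- **Stability of the coefficient matrix `B`.**
Setting: `M ≥ P ≥ 1`; `U ∈ ℂ^{M×P}` has orthonormal columns (`UᴴU = I`), `A` satisfies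
`AU = U`, `UᴴA = Uᴴ` and `ρ(A - UUᴴ) < 1`; `H` is Hermitian with `0 ≤ H ≤ δI` and
`νI_P ≤ UᴴHU` for constants `0 < ν ≤ δ`.  Conclusion: there exists `μ₀ > 0` such that for
every `μ ∈ (0, μ₀)` the matrix `B_μ = A(I - μH)` has spectral radius `ρ(B_μ) < 1`. -/
theorem stability_of_coefficient_matrix_B
    {M P : ℕ} (hP : 1 ≤ P) (hPM : P ≤ M)
    (U : Matrix (Fin M) (Fin P) ℂ) (A H : Matrix (Fin M) (Fin M) ℂ)
    (ν δ : ℝ) (hν : 0 < ν) (hνδ : ν ≤ δ)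
    (hUU : Uᴴ * U = 1)
    (hAU : A * U = U)
    (hUA : Uᴴ * A = Uᴴ)
    (hρ : spectralRadius ℂ (A - U * Uᴴ) < 1)
    (hH0 : H.PosSemidef)
    (hHδ : ((δ : ℂ) • (1 : Matrix (Fin M) (Fin M) ℂ) - H).PosSemidef)
    (hHν : (Uᴴ * H * U - (ν : ℂ) • (1 : Matrix (Fin P) (Fin P) ℂ)).PosSemidef) :
    ∃ μ₀ : ℝ, 0 < μ₀ ∧ ∀ μ : ℝ, 0 < μ → μ < μ₀ →
      spectralRadius ℂ (A * (1 - (μ : ℂ) • H)) < 1 := by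
  exact stability_of_coefficient_matrix_B_general hUU hAU hUA hρ
    fun θ hθ => hν.trans_le (le_re_of_mem_spectrum_of_posSemidef_sub hHν hθ)
end

section
/- Order of the resolvent (I − B)^{-1}. There exist constants μ₀ > 0 and C > 0 such that for every μ ∈ (0, μ₀), the matrix I_M − B_μ is invertible and ‖(I_M − B_μ)^{-1}‖ ≤ C/μ, where B_μ = A(I_M − μH). -/
open Matrix
open scoped ComplexOrder

/-!
Put `N = 1 - A`, `K = A H` and `p = U Uᴴ`, so that `1 - A (1 - μ H) = N + μ K` and `N p = 0`. At
`μ = 0` this pencil is singular on the range of `p`, but rescaling the complementary directions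
extracts the singularity as a scalar factor:
`(N + μ K) (p + μ (1 - p)) = μ L(μ)` with `L(μ) = N + K p + μ K (1 - p)`.
The limit `L(0) = 1 - A + A H U Uᴴ` is invertible: multiplying it on the left by
`1 + (U - A H U) (Uᴴ H U)⁻¹ Uᴴ` gives `1 - (A - U Uᴴ)`, which is invertible by the spectral radius
bound. Hence `(N + μ K)⁻¹ = μ⁻¹ (p + μ (1 - p)) L(μ)⁻¹`, where the factor after `μ⁻¹` stays bounded
as `μ → 0`.
-/

open Asymptotics Filter
open scoped Topology Ring

/-- For a pencil `N + z K` that degenerates at `z = 0` on the range of `p` (that is, `N p = 0`), the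
pencil left after rescaling the directions `1 - p` by `z` and dividing by `z`. -/
def reducedPencil {𝕜 R : Type*} [Ring R] [SMul 𝕜 R] (N K p : R) (z : 𝕜) : R :=
  N + K * p + z • (K * (1 - p))

theorem add_smul_mul_add_smul_one_sub {𝕜 R : Type*} [CommSemiring 𝕜] [Ring R] [Algebra 𝕜 R]
    {N K p : R} {z : 𝕜} (hNp : N * p = 0) :
    (N + z • K) * (p + z • (1 - p)) = z • reducedPencil N K p z := by
  have hN : N * (1 - p) = N := by rw [mul_sub, hNp, mul_one, sub_zero]
  simp only [reducedPencil, add_mul, mul_add, smul_mul_assoc, mul_smul_comm, hNp, hN, smul_add,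
    zero_add]
  abel

theorem reducedPencil_zero {𝕜 R : Type*} [Semiring 𝕜] [Ring R] [Module 𝕜 R] {N K p : R} :
    reducedPencil N K p (0 : 𝕜) = N + K * p := by
  rw [reducedPencil, zero_smul, add_zero]

section Algebraic

variable {𝕜 R : Type*} [Field 𝕜] [Ring R] [Algebra 𝕜 R] {N K p : R} {z : 𝕜}

theorem add_smul_mul_inv_smul_inverse_reducedPencil (hNp : N * p = 0) (hz : z ≠ 0)
    (hL : IsUnit (reducedPencil N K p z)) :
    (N + z • K) * (z⁻¹ • ((p + z • (1 - p)) * (reducedPencil N K p z)⁻¹ʳ)) = 1 := by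
  rw [mul_smul_comm, ← mul_assoc, add_smul_mul_add_smul_one_sub hNp, smul_mul_assoc,
    inv_smul_smul₀ hz, Ring.mul_inverse_cancel _ hL]

variable [IsDedekindFiniteMonoid R]

theorem isUnit_add_smul_of_isUnit_reducedPencil (hNp : N * p = 0) (hz : z ≠ 0)
    (hL : IsUnit (reducedPencil N K p z)) : IsUnit (N + z • K) :=
  .of_mul_eq_one _ (add_smul_mul_inv_smul_inverse_reducedPencil hNp hz hL)

theorem inverse_add_smul_eq_inv_smul (hNp : N * p = 0) (hz : z ≠ 0)
    (hL : IsUnit (reducedPencil N K p z)) :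
    (N + z • K)⁻¹ʳ = z⁻¹ • ((p + z • (1 - p)) * (reducedPencil N K p z)⁻¹ʳ) :=
  left_inv_eq_right_inv
    (Ring.inverse_mul_cancel _ (isUnit_add_smul_of_isUnit_reducedPencil hNp hz hL))
    (add_smul_mul_inv_smul_inverse_reducedPencil hNp hz hL)

end Algebraic

section Asymptotic

variable {𝕜 R : Type*} [NormedField 𝕜] [NormedRing R] [NormedAlgebra 𝕜 R] {N K p : R}

theorem continuous_reducedPencil : Continuous fun z : 𝕜 => reducedPencil N K p z := by
  unfold reducedPencil
  fun_prop

variable [HasSummableGeomSeries R]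

theorem eventually_isUnit_reducedPencil (h₀ : IsUnit (N + K * p)) :
    ∀ᶠ z : 𝕜 in 𝓝 0, IsUnit (reducedPencil N K p z) := by
  have hL : IsUnit (reducedPencil N K p (0 : 𝕜)) := by rwa [reducedPencil_zero]
  exact continuous_reducedPencil.continuousAt.eventually (Units.isOpen.mem_nhds hL)

theorem continuousAt_inverse_reducedPencil (h₀ : IsUnit (N + K * p)) :
    ContinuousAt (fun z : 𝕜 => (reducedPencil N K p z)⁻¹ʳ) 0 := by
  obtain ⟨u, hu⟩ : IsUnit (reducedPencil N K p (0 : 𝕜)) := by rwa [reducedPencil_zero]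
  exact ContinuousAt.comp (hu ▸ NormedRing.inverse_continuousAt u)
    continuous_reducedPencil.continuousAt

variable [IsDedekindFiniteMonoid R]

theorem eventually_isUnit_add_smul (hNp : N * p = 0) (h₀ : IsUnit (N + K * p)) :
    ∀ᶠ z : 𝕜 in 𝓝[≠] 0, IsUnit (N + z • K) := by
  filter_upwards [self_mem_nhdsWithin, (eventually_isUnit_reducedPencil h₀).filter_mono
    nhdsWithin_le_nhds] with z hz hL
  exact isUnit_add_smul_of_isUnit_reducedPencil hNp hz hL

theorem inverse_add_smul_isBigO_inv (hNp : N * p = 0) (h₀ : IsUnit (N + K * p)) :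
    (fun z : 𝕜 => (N + z • K)⁻¹ʳ) =O[𝓝[≠] 0] fun z => z⁻¹ := by
  have hbounded : (fun z : 𝕜 => (p + z • (1 - p)) * (reducedPencil N K p z)⁻¹ʳ)
      =O[𝓝[≠] 0] fun _ => (1 : 𝕜) := by
    have hrescale : ContinuousAt (fun z : 𝕜 => p + z • (1 - p)) 0 := by fun_prop
    exact ((hrescale.mul (continuousAt_inverse_reducedPencil h₀)).tendsto.isBigO_one 𝕜).mono
      nhdsWithin_le_nhds
  have hfactor : (fun z : 𝕜 => (N + z • K)⁻¹ʳ) =ᶠ[𝓝[≠] 0]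
      fun z => z⁻¹ • ((p + z • (1 - p)) * (reducedPencil N K p z)⁻¹ʳ) := by
    filter_upwards [self_mem_nhdsWithin, (eventually_isUnit_reducedPencil h₀).filter_mono
      nhdsWithin_le_nhds] with z hz hL
    exact inverse_add_smul_eq_inv_smul hNp hz hL
  simpa using hfactor.trans_isBigO ((isBigO_refl (fun z : 𝕜 => z⁻¹) _).smul hbounded)

end Asymptotic

theorem isUnit_add_mul_mul_of_mul_eq_zero {m n R : Type*} [Fintype m] [DecidableEq m] [Fintype n]
    [DecidableEq n] [CommRing R] {N K : Matrix m m R} {U : Matrix m n R} {V : Matrix n m R}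
    (hVN : V * N = 0) (hNUV : IsUnit (N + U * V)) (hVKU : IsUnit (V * K * U)) :
    IsUnit (N + K * (U * V)) := by
  have hleft : (V * K * U)⁻¹ * V * (N + K * (U * V)) = V := by
    rw [Matrix.mul_assoc, Matrix.mul_add, hVN, zero_add,
      show V * (K * (U * V)) = V * K * U * V by simp only [Matrix.mul_assoc],
      Matrix.nonsing_inv_mul_cancel_left _ _ ((Matrix.isUnit_iff_isUnit_det _).1 hVKU)]
  have hfactor : (1 + (U - K * U) * ((V * K * U)⁻¹ * V)) * (N + K * (U * V)) = N + U * V := by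
    rw [add_mul, one_mul, Matrix.mul_assoc (U - K * U), hleft, Matrix.sub_mul, Matrix.mul_assoc K]
    abel
  exact isUnit_of_mul_isUnit_right (hfactor ▸ hNUV)

theorem isUnit_one_sub_of_spectralRadius_lt_one {𝕜 R : Type*} [NormedField 𝕜] [Ring R]
    [Algebra 𝕜 R] {a : R} (ha : spectralRadius 𝕜 a < 1) : IsUnit (1 - a) := by
  have hmem : (1 : 𝕜) ∈ resolventSet 𝕜 a :=
    spectrum.mem_resolventSet_of_spectralRadius_lt (by simpa using ha)
  simpa [spectrum.mem_resolventSet_iff] using hmem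

theorem isUnit_of_posSemidef_sub_smul_one {n 𝕜 : Type*} [Fintype n] [DecidableEq n] [RCLike 𝕜]
    {X : Matrix n n 𝕜} {c : 𝕜} (hc : 0 < c) (hX : (X - c • (1 : Matrix n n 𝕜)).PosSemidef) :
    IsUnit X := by
  simpa using ((Matrix.PosDef.one.smul hc).add_posSemidef hX).isUnit

open scoped Matrix.Norms.L2Operator in
theorem order_of_resolvent_I_sub_B_general {m n : Type*} [Fintype m] [DecidableEq m] [Fintype n]
    [DecidableEq n] (U : Matrix m n ℂ) (V : Matrix n m ℂ) (A H : Matrix m m ℂ)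
    (hAU : A * U = U) (hVA : V * A = V) (hAUV : IsUnit (1 - (A - U * V)))
    (hVHU : IsUnit (V * H * U)) :
    ∃ μ₀ : ℝ, 0 < μ₀ ∧ ∃ C : ℝ, 0 < C ∧ ∀ μ : ℂ, μ ≠ 0 → ‖μ‖ < μ₀ →
      IsUnit (1 - A * (1 - μ • H)) ∧ cSpecNorm (1 - A * (1 - μ • H))⁻¹ ≤ C / ‖μ‖ := by
  have hpencil (μ : ℂ) : 1 - A * (1 - μ • H) = (1 - A) + μ • (A * H) := by
    rw [mul_sub, mul_one, mul_smul_comm, ← sub_add]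
  have hker : (1 - A) * (U * V) = 0 := by
    rw [sub_mul, one_mul, ← Matrix.mul_assoc, hAU, sub_self]
  have hlimit : IsUnit ((1 - A) + A * H * (U * V)) := by
    refine isUnit_add_mul_mul_of_mul_eq_zero ?_ (by rwa [← sub_add] at hAUV) ?_
    · rw [Matrix.mul_sub, hVA, Matrix.mul_one, sub_self]
    · rwa [← Matrix.mul_assoc V, hVA]
  have hunit := eventually_isUnit_add_smul (𝕜 := ℂ) hker hlimit
  obtain ⟨C, hC, hbound⟩ := (inverse_add_smul_isBigO_inv (𝕜 := ℂ) hker hlimit).exists_pos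
  obtain ⟨μ₀, hμ₀, hball⟩ :=
    Metric.eventually_nhds_iff.1 (eventually_nhdsWithin_iff.1 (hunit.and hbound.bound))
  refine ⟨μ₀, hμ₀, C, hC, fun μ hμ hμlt => ?_⟩
  obtain ⟨hμunit, hμbound⟩ := hball (by simpa using hμlt) hμ
  rw [hpencil, Matrix.nonsing_inv_eq_ringInverse]
  exact ⟨hμunit, hμbound.trans_eq (by rw [norm_inv, div_eq_mul_inv])⟩

/-- **Order of the resolvent `(I − B)⁻¹`.**
Setting: `M ≥ P ≥ 1`; `U ∈ ℂ^{M×P}` has orthonormal columns, `A` satisfies `AU = U`,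
`UᴴA = Uᴴ` and `ρ(A - UUᴴ) < 1`; `H` is Hermitian with `0 ≤ H ≤ δI` and `νI_P ≤ UᴴHU`,
`0 < ν ≤ δ`.  Conclusion: there exist `μ₀ > 0` and `C > 0` such that for every
`μ ∈ (0, μ₀)`, the matrix `I - B_μ` (with `B_μ = A(I - μH)`) is invertible and
`‖(I - B_μ)⁻¹‖ ≤ C/μ` in the spectral norm. -/
theorem order_of_resolvent_I_sub_B
    {M P : ℕ} (hP : 1 ≤ P) (hPM : P ≤ M)
    (U : Matrix (Fin M) (Fin P) ℂ) (A H : Matrix (Fin M) (Fin M) ℂ)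
    (ν δ : ℝ) (hν : 0 < ν) (hνδ : ν ≤ δ)
    (hUU : Uᴴ * U = 1)
    (hAU : A * U = U)
    (hUA : Uᴴ * A = Uᴴ)
    (hρ : spectralRadius ℂ (A - U * Uᴴ) < 1)
    (hH0 : H.PosSemidef)
    (hHδ : ((δ : ℂ) • (1 : Matrix (Fin M) (Fin M) ℂ) - H).PosSemidef)
    (hHν : (Uᴴ * H * U - (ν : ℂ) • (1 : Matrix (Fin P) (Fin P) ℂ)).PosSemidef) :
    ∃ μ₀ : ℝ, 0 < μ₀ ∧ ∃ C : ℝ, 0 < C ∧ ∀ μ : ℝ, 0 < μ → μ < μ₀ →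
      IsUnit (1 - A * (1 - (μ : ℂ) • H)) ∧
      cSpecNorm (1 - A * (1 - (μ : ℂ) • H))⁻¹ ≤ C / μ := by
  obtain ⟨μ₀, hμ₀, C, hC, h⟩ := order_of_resolvent_I_sub_B_general U Uᴴ A H hAU hUA
    (isUnit_one_sub_of_spectralRadius_lt_one hρ)
    (isUnit_of_posSemidef_sub_smul_one (by exact_mod_cast hν) hHν)
  refine ⟨μ₀, hμ₀, C, hC, fun μ hμ hμlt => ?_⟩
  simpa [abs_of_pos hμ] using h μ (by exact_mod_cast hμ.ne') (by simpa [abs_of_pos hμ] using hμlt)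
end

section
/- Characterization of the projection onto an intersection (Lemma 3). Let Ω₁ ⊆ E be a nonempty closed affine subset (i.e., (1−α)x + αy ∈ Ω₁ for all x, y ∈ Ω₁ and all α ∈ ℝ) and let Ω₂ ⊆ E be a nonempty closed convex subset. Fix C ∈ E and let Z = Π_{Ω₂}(Π_{Ω₁}(C)). If Z ∈ Ω₁, then Ω₁ ∩ Ω₂ is nonempty and Π_{Ω₁ ∩ Ω₂}(C) = Z. -/
/-!
The residual `C - Y` of the projection `Y` of `C` onto an affine subspace is orthogonal to that
subspace: the variational inequality `⟪C - Y, A - Y⟫ ≤ 0` holds for `A` as well as for its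
reflection `2 • Y - A`. By Pythagoras, `‖C - A‖² = ‖C - Y‖² + ‖Y - A‖²` on the affine subspace, so
there the distances to `C` and to `Y` are ordered in the same way. Hence a point of the affine
subspace that is nearest to `Y` in the convex set is nearest to `C` in the intersection.
-/

open scoped RealInnerProductSpace

lemma exists_affineSubspace_coe_eq {k V : Type*} [Field k] [NeZero (2 : k)] [AddCommGroup V]
    [Module k V] {s : Set V} (hs : ∀ x ∈ s, ∀ y ∈ s, ∀ α : k, (1 - α) • x + α • y ∈ s) :
    ∃ S : AffineSubspace k V, (S : Set V) = s := by
  refine ⟨⟨s, fun c p q r hp hq hr ↦ ?_⟩, rfl⟩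
  -- `c • (p - q) + r` is the midpoint of two points on the lines `rp` and `rq`.
  have hmid := hs _ (hs r hr p hp (2 * c)) _ (hs r hr q hq (-(2 * c))) 2⁻¹
  have h2 : (2 : k) ≠ 0 := two_ne_zero
  convert hmid using 1
  rw [vsub_eq_sub, vadd_eq_add]
  match_scalars <;> field_simp <;> ring

/-- The relation `Y = Π_S(C)` of metric projection, stated relationally so that neither existence
nor uniqueness of a minimizer is presupposed. -/
def IsMetricProjection {E : Type*} [SeminormedAddCommGroup E] (S : Set E) (C Y : E) : Prop :=
  Y ∈ S ∧ ∀ A ∈ S, ‖C - Y‖ ≤ ‖C - A‖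

namespace IsMetricProjection

lemma norm_sub_eq_iInf {E : Type*} [SeminormedAddCommGroup E] {S : Set E} {C Y : E}
    (hY : IsMetricProjection S C Y) : ‖C - Y‖ = ⨅ A : S, ‖C - A‖ :=
  (IsMinOn.iInf_eq (f := (‖C - ·‖)) hY.1 hY.2).symm

variable {E : Type*} [NormedAddCommGroup E] [InnerProductSpace ℝ E]

section Convex

variable {K : Set E} {C Y Z A : E}

lemma inner_sub_nonpos (hK : Convex ℝ K) (hY : IsMetricProjection K C Y) (hA : A ∈ K) :
    ⟪C - Y, A - Y⟫ ≤ 0 :=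
  (norm_eq_iInf_iff_real_inner_le_zero hK hY.1).mp hY.norm_sub_eq_iInf A hA

lemma eq_of_convex (hK : Convex ℝ K) (hY : IsMetricProjection K C Y)
    (hZ : IsMetricProjection K C Z) : Y = Z := by
  have hsum : ⟪Y - Z, Y - Z⟫ = ⟪C - Z, Y - Z⟫ + ⟪C - Y, Z - Y⟫ := by
    rw [← neg_sub Y Z, inner_neg_right, ← sub_eq_add_neg, ← inner_sub_left,
      sub_sub_sub_cancel_left]
  have hnonpos : ⟪Y - Z, Y - Z⟫ ≤ 0 :=
    hsum.trans_le (add_nonpos (inner_sub_nonpos hK hZ hY.1) (inner_sub_nonpos hK hY hZ.1))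
  exact sub_eq_zero.mp (real_inner_self_nonpos.mp hnonpos)

end Convex

section AffineSubspace

variable {S : AffineSubspace ℝ E} {T : Set E} {C Y Z A B : E}

lemma inner_sub_eq_zero (hY : IsMetricProjection (S : Set E) C Y) (hA : A ∈ S) :
    ⟪C - Y, A - Y⟫ = 0 := by
  have hreflection : Y - A + Y ∈ S := by
    simpa using S.smul_vsub_vadd_mem 1 hY.1 hA hY.1
  have hneg : -⟪C - Y, A - Y⟫ ≤ 0 := by
    simpa only [add_sub_cancel_right, ← neg_sub A Y, inner_neg_right]
      using inner_sub_nonpos S.convex hY hreflection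
  exact le_antisymm (inner_sub_nonpos S.convex hY hA) (neg_nonpos.mp hneg)

lemma norm_sub_sq_eq_add (hY : IsMetricProjection (S : Set E) C Y) (hA : A ∈ S) :
    ‖C - A‖ ^ 2 = ‖C - Y‖ ^ 2 + ‖Y - A‖ ^ 2 := by
  rw [norm_sub_rev Y A, ← sub_sub_sub_cancel_right C A Y, norm_sub_sq_real,
    hY.inner_sub_eq_zero hA, mul_zero, sub_zero]

lemma norm_sub_le_norm_sub_iff (hY : IsMetricProjection (S : Set E) C Y) (hA : A ∈ S)
    (hB : B ∈ S) : ‖C - A‖ ≤ ‖C - B‖ ↔ ‖Y - A‖ ≤ ‖Y - B‖ := by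
  rw [← sq_le_sq₀ (norm_nonneg _) (norm_nonneg _), hY.norm_sub_sq_eq_add hA,
    hY.norm_sub_sq_eq_add hB, add_le_add_iff_left, sq_le_sq₀ (norm_nonneg _) (norm_nonneg _)]

lemma inter (hY : IsMetricProjection (S : Set E) C Y) (hZ : IsMetricProjection T Y Z)
    (hZS : Z ∈ S) : IsMetricProjection (S ∩ T) C Z :=
  ⟨⟨hZS, hZ.1⟩, fun A hA ↦ (hY.norm_sub_le_norm_sub_iff hZS hA.1).mpr (hZ.2 A hA.2)⟩

end AffineSubspace

end IsMetricProjection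

theorem projection_onto_intersection_characterization_general
    {E : Type*} [NormedAddCommGroup E] [InnerProductSpace ℝ E]
    {S : AffineSubspace ℝ E} {T : Set E} (hT : Convex ℝ T) {C Y Z : E}
    (hY : IsMetricProjection (S : Set E) C Y) (hZ : IsMetricProjection T Y Z) (hZS : Z ∈ S) :
    IsMetricProjection (S ∩ T) C Z ∧ ∀ W, IsMetricProjection (S ∩ T) C W → W = Z :=
  have hCZ := hY.inter hZ hZS
  ⟨hCZ, fun _ hW ↦ hW.eq_of_convex (S.convex.inter hT) hCZ⟩

/-- **Characterization of the projection onto an intersection (Lemma 3).**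
Let `E` be a real Hilbert space, `Ω₁ ⊆ E` a nonempty closed affine subset, and `Ω₂ ⊆ E` a
nonempty closed convex subset.  Fix `C ∈ E`, let `Y = Π_{Ω₁}(C)` and `Z = Π_{Ω₂}(Y)`
(metric projections, encoded as the distance minimizers over the corresponding sets).
If `Z ∈ Ω₁`, then `Ω₁ ∩ Ω₂` is nonempty and `Π_{Ω₁ ∩ Ω₂}(C) = Z`, i.e. `Z` lies in
`Ω₁ ∩ Ω₂`, minimizes the distance to `C` over `Ω₁ ∩ Ω₂`, and is the unique such
minimizer. -/
theorem projection_onto_intersection_characterization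
    {E : Type*} [NormedAddCommGroup E] [InnerProductSpace ℝ E] [CompleteSpace E]
    (Ω₁ Ω₂ : Set E)
    (h1ne : Ω₁.Nonempty) (h1closed : IsClosed Ω₁)
    (h1aff : ∀ x ∈ Ω₁, ∀ y ∈ Ω₁, ∀ α : ℝ, (1 - α) • x + α • y ∈ Ω₁)
    (h2ne : Ω₂.Nonempty) (h2closed : IsClosed Ω₂) (h2conv : Convex ℝ Ω₂)
    (C Y Z : E)
    (hY : Y ∈ Ω₁ ∧ ∀ A ∈ Ω₁, ‖C - Y‖ ≤ ‖C - A‖)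
    (hZ : Z ∈ Ω₂ ∧ ∀ A ∈ Ω₂, ‖Y - Z‖ ≤ ‖Y - A‖)
    (hZ1 : Z ∈ Ω₁) :
    (Ω₁ ∩ Ω₂).Nonempty ∧
    Z ∈ Ω₁ ∩ Ω₂ ∧
    (∀ A ∈ Ω₁ ∩ Ω₂, ‖C - Z‖ ≤ ‖C - A‖) ∧
    (∀ Z' ∈ Ω₁ ∩ Ω₂, (∀ A ∈ Ω₁ ∩ Ω₂, ‖C - Z'‖ ≤ ‖C - A‖) → Z' = Z) := by
  obtain ⟨S, rfl⟩ := exists_affineSubspace_coe_eq h1aff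
  have ⟨hCZ, hunique⟩ := projection_onto_intersection_characterization_general h2conv hY hZ hZ1
  exact ⟨⟨Z, hCZ.1⟩, hCZ.1, hCZ.2, fun Z' hZ' hmin ↦ hunique Z' ⟨hZ', hmin⟩⟩
end

section
/- Explicit projection onto Ω₁. For every D ∈ ℝ^{M×M}, the matrix A° = (I_M − P_U)((D + Dᵀ)/2)(I_M − P_U) + P_U belongs to Ω₁ and is the unique minimizer of the Frobenius norm ‖A − D‖_F over all A ∈ Ω₁; that is, the Frobenius-norm projection of D onto Ω₁ equals (I − P_U)((D + Dᵀ)/2)(I − P_U) + P_U. -/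
open Matrix

/-- The Frobenius norm `‖X‖_F = √Tr(XᵀX)` of a real square matrix. -/
noncomputable def frobNorm {M : ℕ} (X : Matrix (Fin M) (Fin M) ℝ) : ℝ :=
  Real.sqrt ((Xᵀ * X).trace)

/-!
Let `U` be a partial isometry, `U Uᴴ U = U`, and write `Q = 1 - U Uᴴ`, `S = (D + Dᴴ)/2` and
`B = Q S Q + U Uᴴ`. For `A ∈ Ω₁` the difference `H = A - B` is Hermitian with `H U = 0`, hence
`H Q = Q H = H`. Cyclicity of the trace gives `tr (H B) = tr (Q H S) = tr (H S)`, and `tr (H S)` has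
the same real part as `tr (H D)` because `H` is Hermitian. So `H` is orthogonal to `B - D`, and
Pythagoras yields `‖A - D‖² = ‖A - B‖² + ‖B - D‖²`, which contains both minimality and uniqueness.
-/

open scoped Matrix.Norms.Frobenius

section Complement

variable {m n p R : Type*} [Ring R] [StarRing R] [DecidableEq m] [Fintype p]

theorem isHermitian_one_sub_mul_conjTranspose_self (U : Matrix m p R) :
    (1 - U * Uᴴ).IsHermitian :=
  isHermitian_one.sub (isHermitian_mul_conjTranspose_self U)

variable [Fintype m]

theorem one_sub_mul_conjTranspose_mul_self {U : Matrix m p R} (hU : U * Uᴴ * U = U) :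
    (1 - U * Uᴴ) * U = 0 := by
  rw [Matrix.sub_mul, Matrix.one_mul, hU, sub_self]

theorem mul_one_sub_mul_conjTranspose {H : Matrix n m R} {U : Matrix m p R} (hHU : H * U = 0) :
    H * (1 - U * Uᴴ) = H := by
  rw [Matrix.mul_sub, Matrix.mul_one, ← Matrix.mul_assoc, hHU, Matrix.zero_mul, sub_zero]

end Complement

section Frobenius

variable {m n 𝕜 : Type*} [Fintype m] [Fintype n] [RCLike 𝕜]

theorem frobenius_norm_sq_eq_re_trace (X : Matrix m n 𝕜) :
    ‖X‖ ^ 2 = RCLike.re (Xᴴ * X).trace := by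
  have hsum : 0 ≤ ∑ i, ∑ j, ‖X i j‖ ^ 2 := by positivity
  simp only [frobenius_norm_def, Real.rpow_two, ← Real.sqrt_eq_rpow, Real.sq_sqrt hsum,
    trace, diag_apply, mul_apply, conjTranspose_apply, map_sum, RCLike.star_def, RCLike.conj_mul]
  rw [Finset.sum_comm]
  norm_cast

theorem frobNorm_eq_frobenius_norm {M : ℕ} (X : Matrix (Fin M) (Fin M) ℝ) :
    frobNorm X = ‖X‖ := by
  rw [← Real.sqrt_sq (norm_nonneg X), frobenius_norm_sq_eq_re_trace, RCLike.re_to_real,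
    conjTranspose_eq_transpose_of_trivial, frobNorm]

theorem re_trace_conjTranspose_mul_comm (X Y : Matrix m n 𝕜) :
    RCLike.re (Yᴴ * X).trace = RCLike.re (Xᴴ * Y).trace := by
  rw [← RCLike.conj_re, starRingEnd_apply, ← trace_conjTranspose, conjTranspose_mul,
    conjTranspose_conjTranspose]

theorem frobenius_norm_add_sq (X Y : Matrix m n 𝕜) :
    ‖X + Y‖ ^ 2 = ‖X‖ ^ 2 + 2 * RCLike.re (Xᴴ * Y).trace + ‖Y‖ ^ 2 := by
  simp only [frobenius_norm_sq_eq_re_trace, conjTranspose_add, Matrix.add_mul, Matrix.mul_add,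
    trace_add, map_add, re_trace_conjTranspose_mul_comm X Y]
  ring

theorem re_trace_mul_hermitianPart {H : Matrix m m 𝕜} (hH : H.IsHermitian) (D : Matrix m m 𝕜) :
    RCLike.re (H * ((2 : 𝕜)⁻¹ • (D + Dᴴ))).trace = RCLike.re (H * D).trace := by
  have hconj : (H * Dᴴ).trace = star (H * D).trace := by
    rw [← trace_conjTranspose, conjTranspose_mul, hH.eq, trace_mul_comm]
  rw [Matrix.mul_smul, trace_smul, Matrix.mul_add, trace_add, hconj, RCLike.star_def,
    RCLike.add_conj, smul_eq_mul, inv_mul_cancel_left₀ two_ne_zero, RCLike.ofReal_re]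

end Frobenius

section Projection

variable {m p 𝕜 : Type*} [Fintype m] [DecidableEq m] [Fintype p] [RCLike 𝕜]

/-- The constraint set `Ω₁` of Hermitian (over `ℝ`: symmetric) matrices that fix every column
of `U`. -/
def Omega1 (U : Matrix m p 𝕜) : Set (Matrix m m 𝕜) :=
  {A | A * U = U ∧ A.IsHermitian}

/-- The closed form of the Frobenius projection of `D` onto `Omega1 U`. The projector `P_U` is
encoded as `U * Uᴴ`, so `U` is meant to be a partial isometry, for instance a matrix with
orthonormal columns. -/
noncomputable def projOmega1 (U : Matrix m p 𝕜) (D : Matrix m m 𝕜) : Matrix m m 𝕜 :=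
  (1 - U * Uᴴ) * ((2 : 𝕜)⁻¹ • (D + Dᴴ)) * (1 - U * Uᴴ) + U * Uᴴ

theorem projOmega1_mem {U : Matrix m p 𝕜} (hU : U * Uᴴ * U = U) (D : Matrix m m 𝕜) :
    projOmega1 U D ∈ Omega1 U := by
  constructor
  · rw [projOmega1, Matrix.add_mul, Matrix.mul_assoc, one_sub_mul_conjTranspose_mul_self hU,
      Matrix.mul_zero, zero_add, hU]
  · have hS : ((2 : 𝕜)⁻¹ • (D + Dᴴ)).IsHermitian :=
      (isHermitian_add_transpose_self D).smul (IsSelfAdjoint.ofNat 2).inv₀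
    have hQSQ := isHermitian_mul_mul_conjTranspose (1 - U * Uᴴ) hS
    rw [(isHermitian_one_sub_mul_conjTranspose_self U).eq] at hQSQ
    exact hQSQ.add (isHermitian_mul_conjTranspose_self U)

theorem re_trace_mul_projOmega1_sub_eq_zero {U : Matrix m p 𝕜} {H : Matrix m m 𝕜}
    (hHU : H * U = 0) (hH : H.IsHermitian) (D : Matrix m m 𝕜) :
    RCLike.re (H * (projOmega1 U D - D)).trace = 0 := by
  let Q := 1 - U * Uᴴ
  let S := (2 : 𝕜)⁻¹ • (D + Dᴴ)
  have hB : projOmega1 U D = Q * S * Q + U * Uᴴ := rfl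
  have hQ : Q.IsHermitian := isHermitian_one_sub_mul_conjTranspose_self U
  have hHQ : H * Q = H := mul_one_sub_mul_conjTranspose hHU
  have hQH : Q * H = H := by
    simpa only [conjTranspose_mul, hH.eq, hQ.eq] using congrArg conjTranspose hHQ
  have htrace : (H * projOmega1 U D).trace = (H * S).trace := calc
    (H * projOmega1 U D).trace = (H * Q * S * Q).trace := by
      simp only [hB, Matrix.mul_add, ← Matrix.mul_assoc, hHU, Matrix.zero_mul, add_zero]
    _ = (Q * H * S).trace := by rw [hHQ, trace_mul_cycle]
    _ = (H * S).trace := by rw [hQH]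
  rw [Matrix.mul_sub, trace_sub, htrace, map_sub, re_trace_mul_hermitianPart hH, sub_self]

theorem frobenius_norm_sub_sq_of_mem_Omega1 {U : Matrix m p 𝕜} (hU : U * Uᴴ * U = U)
    (D : Matrix m m 𝕜) {A : Matrix m m 𝕜} (hA : A ∈ Omega1 U) :
    ‖A - D‖ ^ 2 = ‖A - projOmega1 U D‖ ^ 2 + ‖projOmega1 U D - D‖ ^ 2 := by
  obtain ⟨hBU, hB⟩ := projOmega1_mem hU D
  have hHU : (A - projOmega1 U D) * U = 0 := by rw [Matrix.sub_mul, hA.1, hBU, sub_self]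
  have hH : (A - projOmega1 U D).IsHermitian := hA.2.sub hB
  rw [← sub_add_sub_cancel A (projOmega1 U D) D, frobenius_norm_add_sq, hH.eq,
    re_trace_mul_projOmega1_sub_eq_zero hHU hH, mul_zero, add_zero]

theorem projection_onto_Omega1_general {U : Matrix m p 𝕜} (hU : U * Uᴴ * U = U)
    (D : Matrix m m 𝕜) :
    projOmega1 U D ∈ Omega1 U ∧ ∀ A ∈ Omega1 U,
      ‖projOmega1 U D - D‖ ≤ ‖A - D‖ ∧
      (‖A - D‖ = ‖projOmega1 U D - D‖ → A = projOmega1 U D) := by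
  refine ⟨projOmega1_mem hU D, fun A hA => ?_⟩
  have hpyth := frobenius_norm_sub_sq_of_mem_Omega1 hU D hA
  constructor
  · refine le_of_sq_le_sq ?_ (norm_nonneg _)
    rw [hpyth]
    exact le_add_of_nonneg_left (sq_nonneg _)
  · intro heq
    rw [heq, right_eq_add, sq_eq_zero_iff, norm_eq_zero, sub_eq_zero] at hpyth
    exact hpyth

end Projection

/-- **Explicit projection onto `Ω₁ = {A : AU = U, A = Aᵀ}`.**
`U ∈ ℝ^{M×P}` has orthonormal columns and `P_U = UUᵀ`.  For every `D ∈ ℝ^{M×M}`, the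
matrix `A° = (I - P_U)((D + Dᵀ)/2)(I - P_U) + P_U` belongs to `Ω₁` and is the unique
minimizer of the Frobenius norm `‖A - D‖_F` over all `A ∈ Ω₁`. -/
theorem projection_onto_Omega1
    {M P : ℕ} (U : Matrix (Fin M) (Fin P) ℝ) (hU : Uᵀ * U = 1)
    (D : Matrix (Fin M) (Fin M) ℝ) :
    ((1 - U * Uᵀ) * ((2 : ℝ)⁻¹ • (D + Dᵀ)) * (1 - U * Uᵀ) + U * Uᵀ) * U = U ∧
    (1 - U * Uᵀ) * ((2 : ℝ)⁻¹ • (D + Dᵀ)) * (1 - U * Uᵀ) + U * Uᵀ =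
      ((1 - U * Uᵀ) * ((2 : ℝ)⁻¹ • (D + Dᵀ)) * (1 - U * Uᵀ) + U * Uᵀ)ᵀ ∧
    ∀ A : Matrix (Fin M) (Fin M) ℝ, A * U = U → A = Aᵀ →
      frobNorm (((1 - U * Uᵀ) * ((2 : ℝ)⁻¹ • (D + Dᵀ)) * (1 - U * Uᵀ) + U * Uᵀ) - D) ≤
        frobNorm (A - D) ∧
      (frobNorm (A - D) =
          frobNorm (((1 - U * Uᵀ) * ((2 : ℝ)⁻¹ • (D + Dᵀ)) * (1 - U * Uᵀ) + U * Uᵀ) - D) →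
        A = (1 - U * Uᵀ) * ((2 : ℝ)⁻¹ • (D + Dᵀ)) * (1 - U * Uᵀ) + U * Uᵀ) := by
  have hU' : U * Uᵀ * U = U := by rw [Matrix.mul_assoc, hU, Matrix.mul_one]
  simp only [frobNorm_eq_frobenius_norm, ← conjTranspose_eq_transpose_of_trivial] at hU' ⊢
  obtain ⟨⟨hfix, hherm⟩, hmin⟩ := projection_onto_Omega1_general hU' D
  exact ⟨hfix, hherm.symm, fun A hAU hA => hmin A ⟨hAU, hA.symm⟩⟩
end
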